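/- arXiv:math/0605613 — 3 statements merged into one kernel-verified Lean document; each statement's English description precedes it below -/
import Mathlib

section
/- Let Y be a real random variable with P(Y>x)=p·L(x)x^{-α} and P(Y≤−x)=q·L(x)x^{-α} for all x>0, where α>0, p,q≥0, p+q=1, and L is slowly varying. Let G be a random vector in ℝ^d, independent of Y, with |G|>0 almost surely and E|G|^{α+ε}<∞ for some ε>0. Then for every t>0 and every Borel set S of the unit sphere S^{d-1} with E(|G|^α·1{G/|G|∈∂S}) = E(|G|^α·1{−G/|G|∈∂S}) = 0, lim_{x→∞} P( |G||Y| > tx, sign(Y)·G/|G| ∈ S ) / P( |G||Y| > x ) = t^{-α} · [ p·E(|G|^α 1_S(G/|G|)) + q·E(|G|^α 1_S(−G/|G|)) ] / E|G|^α. In particular, the vector GY is regularly varying with index α and its spectral measure is given by P(Θ∈S) = p·E(|G|^α 1_S(G/|G|))/E|G|^α + q·E(|G|^α 1_S(−G/|G|))/E|G|^α. -/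
/-!
Let `F x = L x * x ^ (-α)`, which is `P(|Y| > x)` up to the mass at `-x`. For a random variable
`R ≥ 0` independent of `Y`, conditioning on `R` gives `P(R Y > x) / F x = E[h x R]`, where
`h x r = P(r Y > x) / F x`. Regular variation gives `h x r → p r ^ α`; Potter's bound, which for
monotone `F` follows by iterating `F y ≤ 2 ^ β * F (2 * y)`, dominates `h x r` by a multiple of
`1 + r ^ β` for any `β > α`. Hence `P(R Y > x) / F x → p E[R ^ α]` by dominated convergence.

A set `T` of directions is absorbed into `R`: take `R = |G|` where `G / |G| ∈ T`, and `R = 0`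
elsewhere. The part of `Y G` with `Y < 0` is the same situation for `-Y` and `-G`. Adding the two
limits and dividing by their value for all directions gives the limiting ratio at `t = 1`, and
regular variation of `F` supplies the factor `t ^ (-α)`.
-/

open MeasureTheory ProbabilityTheory Filter
open scoped ProbabilityTheory

variable {Ω : Type*} [MeasureSpace Ω]

/-- A random vector `X` is regularly varying with index `α` and spectral measure `ν`
(a probability measure on the unit sphere): for every `t > 0` and every Borel subset `S`
of the sphere whose boundary is `ν`-null,
`P(|X| > t x, X/|X| ∈ S)/P(|X| > x) → t^{-α} ν(S)`. -/
def IsRegVarWithSpectralMeasure {E : Type*} [NormedAddCommGroup E] [NormedSpace ℝ E]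
    [MeasurableSpace E] (α : ℝ) (X : Ω → E)
    (ν : Measure (Metric.sphere (0 : E) 1)) : Prop :=
  IsProbabilityMeasure ν ∧
  (∀ x : ℝ, 0 < (ℙ : Measure Ω) {ω | ‖X ω‖ > x}) ∧
  ∀ t : ℝ, 0 < t → ∀ S : Set (Metric.sphere (0 : E) 1), MeasurableSet S →
    ν (frontier S) = 0 →
    Tendsto (fun x : ℝ =>
        ((ℙ : Measure Ω) {ω | ‖X ω‖ > t * x ∧ ‖X ω‖⁻¹ • X ω ∈ Subtype.val '' S}).toReal /
          ((ℙ : Measure Ω) {ω | ‖X ω‖ > x}).toReal)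
      atTop (nhds (t ^ (-α) * (ν S).toReal))

open NormedSpace (normalize)
open scoped Topology

/-! ### Regularly varying tails -/

/-- `F` is a regularly varying tail with index `α`: positive and nonincreasing on `(0, ∞)`, with
`F (c x) / F x → c ^ (-α)`. It serves as the normalisation against which all probabilities are
compared. -/
structure IsRegVarTail_s8 (F : ℝ → ℝ) (α : ℝ) : Prop where
  pos : ∀ x, 0 < x → 0 < F x
  antitoneOn : AntitoneOn F (Set.Ioi 0)
  tendsto_ratio : ∀ c, 0 < c → Tendsto (fun x => F (c * x) / F x) atTop (𝓝 (c ^ (-α)))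

lemma tendsto_ratio_mul_rpow {L : ℝ → ℝ} {σ c : ℝ} (hc : 0 < c)
    (hL : Tendsto (fun x => L (c * x) / L x) atTop (𝓝 1)) :
    Tendsto (fun x => L (c * x) * (c * x) ^ σ / (L x * x ^ σ)) atTop (𝓝 (c ^ σ)) := by
  rw [← one_mul (c ^ σ)]
  refine (hL.mul_const (c ^ σ)).congr' ?_
  filter_upwards [eventually_gt_atTop 0] with x hx
  rw [mul_div_mul_comm, Real.mul_rpow hc.le hx.le,
    mul_div_cancel_right₀ _ (Real.rpow_pos_of_pos hx σ).ne']

lemma le_pow_mul_of_le_mul_two {F : ℝ → ℝ} {K y₀ : ℝ} (hK : 0 ≤ K) (hy₀ : 0 ≤ y₀)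
    (hF : ∀ y, y₀ ≤ y → F y ≤ K * F (2 * y)) (n : ℕ) {y : ℝ} (hy : y₀ ≤ y) :
    F y ≤ K ^ n * F (2 ^ n * y) := by
  induction n with
  | zero => simp
  | succ n ih =>
    have hy' : y₀ ≤ 2 ^ n * y :=
      hy.trans (le_mul_of_one_le_left (hy₀.trans hy) (one_le_pow₀ one_le_two))
    calc F y ≤ K ^ n * F (2 ^ n * y) := ih
      _ ≤ K ^ n * (K * F (2 * (2 ^ n * y))) := by gcongr; exact hF _ hy'
      _ = K ^ (n + 1) * F (2 ^ (n + 1) * y) := by rw [← mul_assoc, ← mul_assoc, pow_succ, pow_succ']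

namespace IsRegVarTail_s8

variable {F H : ℝ → ℝ} {α β r : ℝ}

lemma tendsto_comp_mul_div (hF : IsRegVarTail_s8 F α)
    (hH : Tendsto (fun x => H x / F x) atTop (𝓝 r)) {c : ℝ} (hc : 0 < c) :
    Tendsto (fun x => H (c * x) / F x) atTop (𝓝 (r * c ^ (-α))) := by
  refine ((hH.comp (tendsto_id.const_mul_atTop hc)).mul (hF.tendsto_ratio c hc)).congr' ?_
  filter_upwards [eventually_gt_atTop 0] with x hx
  exact div_mul_div_cancel₀ (hF.pos _ (mul_pos hc hx)).ne'

lemma eventually_le_two_rpow_mul (hF : IsRegVarTail_s8 F α) (hαβ : α < β) :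
    ∀ᶠ y in atTop, F y ≤ 2 ^ β * F (2 * y) := by
  have hlt : (2 : ℝ) ^ (-β) < 2 ^ (-α) :=
    Real.rpow_lt_rpow_of_exponent_lt one_lt_two (neg_lt_neg hαβ)
  filter_upwards [(hF.tendsto_ratio 2 two_pos).eventually_const_lt hlt, eventually_gt_atTop 0]
    with y hy hy0
  rw [lt_div_iff₀ (hF.pos y hy0), Real.rpow_neg zero_le_two, inv_mul_lt_iff₀ (by positivity)] at hy
  exact hy.le

/-- Potter's bound, obtained by iterating `F y ≤ 2 ^ β * F (2 * y)` up to the dyadic scale of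
`g` and filling the gap by monotonicity. -/
lemma potter_bound (hF : IsRegVarTail_s8 F α) (hβ : 0 ≤ β) (hαβ : α < β) :
    ∀ᶠ y₀ in atTop, ∀ y, y₀ ≤ y → ∀ g, 1 ≤ g → F y ≤ (2 * g) ^ β * F (g * y) := by
  filter_upwards [eventually_forall_ge_atTop.2 (hF.eventually_le_two_rpow_mul hαβ),
    eventually_gt_atTop 0]
    with y₀ hdouble hy₀ y hy g hg
  obtain ⟨n, hng, hgn⟩ := exists_nat_pow_near hg one_lt_two
  have hy0 : 0 < y := hy₀.trans_le hy
  have hgy : 0 < g * y := by positivity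
  have hpow : ((2 : ℝ) ^ β) ^ (n + 1) ≤ (2 * g) ^ β := by
    rw [Real.rpow_pow_comm zero_le_two, pow_succ']
    gcongr
  calc F y ≤ (2 ^ β) ^ (n + 1) * F (2 ^ (n + 1) * y) :=
        le_pow_mul_of_le_mul_two (by positivity) hy₀.le hdouble (n + 1) hy
    _ ≤ (2 ^ β) ^ (n + 1) * F (g * y) := by
        gcongr
        exact hF.antitoneOn hgy (by positivity : 0 < 2 ^ (n + 1) * y) (by gcongr)
    _ ≤ (2 * g) ^ β * F (g * y) := by
        gcongr
        exact (hF.pos _ hgy).le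

/-- Potter's bound uniformly in `g > 0`, at the price of truncating the argument `x / g` from below
at the threshold `y₀` where the bound starts to hold. -/
lemma eventually_comp_max_div_le (hF : IsRegVarTail_s8 F α) (hβ : 0 ≤ β) (hαβ : α < β) :
    ∀ᶠ y₀ in atTop, ∀ x, y₀ ≤ x → ∀ g, 0 < g →
      F (max (x / g) y₀) ≤ 2 ^ β * (1 + g ^ β) * F x := by
  filter_upwards [hF.potter_bound hβ hαβ, eventually_gt_atTop 0] with y₀ hpotter hy₀ x hx g hg
  set y := max (x / g) y₀
  have hx0 : 0 < x := hy₀.trans_le hx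
  have hy0 : 0 < y := hy₀.trans_le (le_max_right _ _)
  have hFx := hF.pos x hx0
  rcases le_total x y with hxy | hyx
  · have hone : (1 : ℝ) ≤ 2 ^ β * (1 + g ^ β) :=
      one_le_mul_of_one_le_of_one_le (Real.one_le_rpow one_le_two hβ)
        (le_add_of_nonneg_right (by positivity))
    exact (hF.antitoneOn hx0 hy0 hxy).trans (le_mul_of_one_le_left hFx.le hone)
  · have hxyg : x / y ≤ g := (div_le_comm₀ hg hy0).1 (le_max_left _ _)
    calc F y ≤ (2 * (x / y)) ^ β * F (x / y * y) :=
          hpotter y (le_max_right _ _) _ ((one_le_div hy0).2 hyx)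
      _ ≤ (2 * g) ^ β * F x := by rw [div_mul_cancel₀ _ hy0.ne']; gcongr
      _ ≤ 2 ^ β * (1 + g ^ β) * F x := by
        rw [Real.mul_rpow zero_le_two hg.le]
        gcongr
        exact le_add_of_nonneg_left zero_le_one

lemma eventually_exists_le_mul_comp_max (hF : IsRegVarTail_s8 F α) {B : ℝ} (hHB : ∀ x, H x ≤ B)
    (hHF : Tendsto (fun x => H x / F x) atTop (𝓝 r)) :
    ∀ᶠ y₀ in atTop, ∃ C, ∀ z, H z ≤ C * F (max z y₀) := by
  have hbound : ∀ᶠ x in atTop, H x ≤ (r + 1) * F x := by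
    filter_upwards [hHF.eventually_le_const (lt_add_one r), eventually_gt_atTop 0] with x hx hx0
    exact (div_le_iff₀ (hF.pos x hx0)).1 hx
  filter_upwards [eventually_forall_ge_atTop.2 hbound, eventually_gt_atTop 0] with y₀ hle hy₀
  refine ⟨max (r + 1) (B / F y₀), fun z => ?_⟩
  have hFmax := hF.pos _ (hy₀.trans_le (le_max_right z y₀))
  rcases le_total y₀ z with hz | hz
  · rw [max_eq_left hz] at hFmax ⊢
    exact (hle z hz).trans (by gcongr; exact le_max_left _ _)
  · rw [max_eq_right hz] at hFmax ⊢
    calc H z ≤ B := hHB z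
      _ = B / F y₀ * F y₀ := (div_mul_cancel₀ _ hFmax.ne').symm
      _ ≤ max (r + 1) (B / F y₀) * F y₀ := by gcongr; exact le_max_right _ _

lemma exists_comp_div_le (hF : IsRegVarTail_s8 F α) (hβ : 0 ≤ β) (hαβ : α < β)
    (hH : ∀ x, 0 ≤ H x) {B : ℝ} (hHB : ∀ x, H x ≤ B)
    (hHF : Tendsto (fun x => H x / F x) atTop (𝓝 r)) :
    ∃ C, 0 ≤ C ∧ ∀ᶠ x in atTop, ∀ g, 0 < g → H (x / g) / F x ≤ C * (1 + g ^ β) := by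
  obtain ⟨y₀, hmax, ⟨C, hC⟩, hy₀⟩ := ((hF.eventually_comp_max_div_le hβ hαβ).and
    ((hF.eventually_exists_le_mul_comp_max hHB hHF).and (eventually_gt_atTop 0))).exists
  have hC0 : 0 ≤ C := nonneg_of_mul_nonneg_left ((hH y₀).trans (hC y₀))
    (hF.pos _ (hy₀.trans_le (le_max_right _ _)))
  refine ⟨C * 2 ^ β, by positivity, ?_⟩
  filter_upwards [eventually_ge_atTop y₀] with x hx g hg
  rw [div_le_iff₀ (hF.pos x (hy₀.trans_le hx))]
  calc H (x / g) ≤ C * F (max (x / g) y₀) := hC _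
    _ ≤ C * (2 ^ β * (1 + g ^ β) * F x) := by gcongr; exact hmax x hx g hg
    _ = C * 2 ^ β * (1 + g ^ β) * F x := by ring

end IsRegVarTail_s8

/-! ### Breiman's lemma for scalar products -/

section Breiman

lemma setOf_lt_mul_eq {ι : Type*} {g : ℝ} (hg : 0 < g) (W : ι → ℝ) (x : ℝ) :
    {i | x < g * W i} = {i | x / g < W i} := by
  simp only [div_lt_iff₀' hg]

lemma setOf_lt_zero_mul_eq_empty {ι : Type*} {x : ℝ} (hx : 0 ≤ x) (W : ι → ℝ) :
    {i | x < 0 * W i} = ∅ := by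
  simp [hx.not_gt]

variable {Ω : Type*} [MeasurableSpace Ω] {μ : Measure Ω}

lemma measureReal_prodMk_mem_eq_integral {E E' : Type*} [MeasurableSpace E] [MeasurableSpace E']
    [IsFiniteMeasure μ] {X : Ω → E} {Y : Ω → E'} (hX : Measurable X) (hY : Measurable Y)
    (hXY : IndepFun X Y μ) {s : Set (E × E')} (hs : MeasurableSet s) :
    μ.real {ω | (X ω, Y ω) ∈ s} = ∫ ω, μ.real {ω' | (X ω, Y ω') ∈ s} ∂μ := by
  have hmeas : Measurable fun x => (μ.map Y) (Prod.mk x ⁻¹' s) := measurable_measure_prodMk_left hs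
  calc μ.real {ω | (X ω, Y ω) ∈ s}
      = ((μ.map X).prod (μ.map Y)).real s := by
        rw [← (indepFun_iff_map_prod_eq_prod_map_map hX.aemeasurable hY.aemeasurable).1 hXY,
          map_measureReal_apply (hX.prodMk hY) hs]
        rfl
    _ = ∫ x, (μ.map Y).real (Prod.mk x ⁻¹' s) ∂(μ.map X) := by
        rw [measureReal_def, Measure.prod_apply hs]
        exact (integral_toReal hmeas.aemeasurable (ae_of_all _ fun _ => measure_lt_top _ _)).symm
    _ = ∫ ω, (μ.map Y).real (Prod.mk (X ω) ⁻¹' s) ∂μ :=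
        integral_map hX.aemeasurable hmeas.ennreal_toReal.aestronglyMeasurable
    _ = ∫ ω, μ.real {ω' | (X ω, Y ω') ∈ s} ∂μ := by
        simp_rw [map_measureReal_apply hY (measurable_prodMk_left hs)]
        rfl

lemma integrable_rpow_of_le [IsFiniteMeasure μ] {R : Ω → ℝ} (hR : AEStronglyMeasurable R μ)
    (hR0 : ∀ ω, 0 ≤ R ω) {α β : ℝ} (hα : 0 < α) (hαβ : α ≤ β)
    (hint : Integrable (fun ω => R ω ^ β) μ) : Integrable (fun ω => R ω ^ α) μ := by
  have integrable_iff : ∀ {s : ℝ}, 0 < s →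
      (Integrable (fun ω => R ω ^ s) μ ↔ MemLp R (ENNReal.ofReal s) μ) := fun {s} hs => by
    rw [← integrable_norm_rpow_iff hR (ENNReal.ofReal_pos.2 hs).ne' ENNReal.ofReal_ne_top]
    simp only [Real.norm_of_nonneg (hR0 _), ENNReal.toReal_ofReal hs.le]
  rw [integrable_iff hα]
  exact ((integrable_iff (hα.trans_le hαβ)).1 hint).mono_exponent (ENNReal.ofReal_le_ofReal hαβ)

lemma integral_norm_rpow_ne_zero {E : Type*} [NormedAddCommGroup E] {α : ℝ} {G : Ω → E}
    (hG : ∃ᶠ ω in ae μ, 0 < ‖G ω‖) (hint : Integrable (fun ω => ‖G ω‖ ^ α) μ) :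
    ∫ ω, ‖G ω‖ ^ α ∂μ ≠ 0 := by
  intro hzero
  have hae := (integral_eq_zero_iff_of_nonneg (fun _ => by positivity) hint).1 hzero
  obtain ⟨ω, hω, hω0⟩ := (hG.and_eventually hae).exists
  exact (Real.rpow_pos_of_pos hω α).ne' hω0

variable {F : ℝ → ℝ} {α β r : ℝ} {R W : Ω → ℝ}

lemma IsRegVarTail_s8.tendsto_const_mul_tail_div (hF : IsRegVarTail_s8 F α) (hα : α ≠ 0)
    (hW : Tendsto (fun x => μ.real {ω | x < W ω} / F x) atTop (𝓝 r)) {g : ℝ} (hg : 0 ≤ g) :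
    Tendsto (fun x => μ.real {ω | x < g * W ω} / F x) atTop (𝓝 (r * g ^ α)) := by
  rcases hg.eq_or_lt with rfl | hg
  · rw [Real.zero_rpow hα, mul_zero]
    refine tendsto_const_nhds.congr' ?_
    filter_upwards [eventually_ge_atTop 0] with x hx
    rw [setOf_lt_zero_mul_eq_empty hx, measureReal_empty, zero_div]
  · have h := hF.tendsto_comp_mul_div hW (inv_pos.2 hg)
    rw [Real.rpow_neg (inv_nonneg.2 hg.le), Real.inv_rpow hg.le, inv_inv] at h
    simpa only [setOf_lt_mul_eq hg, div_eq_inv_mul] using h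

lemma IsRegVarTail_s8.exists_const_mul_tail_div_le [IsFiniteMeasure μ] (hF : IsRegVarTail_s8 F α)
    (hβ : 0 ≤ β) (hαβ : α < β)
    (hW : Tendsto (fun x => μ.real {ω | x < W ω} / F x) atTop (𝓝 r)) :
    ∃ C, ∀ᶠ x in atTop, ∀ g, 0 ≤ g → μ.real {ω | x < g * W ω} / F x ≤ C * (1 + g ^ β) := by
  obtain ⟨C, hC0, hC⟩ := hF.exists_comp_div_le hβ hαβ
    (fun _ => measureReal_nonneg) (fun _ => measureReal_mono (Set.subset_univ _)) hW
  refine ⟨C, ?_⟩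
  filter_upwards [hC, eventually_ge_atTop 0] with x hx hx0 g hg
  rcases hg.eq_or_lt with rfl | hg
  · rw [setOf_lt_zero_mul_eq_empty hx0, measureReal_empty, zero_div]
    positivity
  · rw [setOf_lt_mul_eq hg]
    exact hx g hg

/-- Breiman's lemma: condition on `R` and apply dominated convergence. -/
theorem IsRegVarTail_s8.tendsto_mul_tail_div [IsFiniteMeasure μ] (hF : IsRegVarTail_s8 F α) (hα : 0 < α)
    (hαβ : α < β) (hR : Measurable R) (hR0 : ∀ ω, 0 ≤ R ω) (hWm : Measurable W)
    (hRW : IndepFun R W μ) (hRint : Integrable (fun ω => R ω ^ β) μ)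
    (hW : Tendsto (fun x => μ.real {ω | x < W ω} / F x) atTop (𝓝 r)) :
    Tendsto (fun x => μ.real {ω | x < R ω * W ω} / F x) atTop (𝓝 (r * ∫ ω, R ω ^ α ∂μ)) := by
  have hcond (x : ℝ) : μ.real {ω | x < R ω * W ω} / F x
      = ∫ ω, μ.real {ω' | x < R ω * W ω'} / F x ∂μ := by
    rw [integral_div]
    exact congrArg (· / F x) (measureReal_prodMk_mem_eq_integral hR hWm hRW
      (measurableSet_lt measurable_const (measurable_fst.mul measurable_snd)))
  have hmeas (x : ℝ) : Measurable fun ω => μ.real {ω' | x < R ω * W ω'} :=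
    (measurable_measure_prodMk_left (ν := μ) (measurableSet_lt measurable_const
      ((hR.comp measurable_fst).mul (hWm.comp measurable_snd)))).ennreal_toReal
  obtain ⟨C, hC⟩ := hF.exists_const_mul_tail_div_le (hα.trans hαβ).le hαβ hW
  simp_rw [hcond, ← integral_const_mul]
  refine tendsto_integral_filter_of_dominated_convergence (fun ω => C * (1 + R ω ^ β))
    (.of_forall fun x => ((hmeas x).div_const _).aestronglyMeasurable) ?_
    (((integrable_const 1).add hRint).const_mul C)
    (ae_of_all _ fun ω => hF.tendsto_const_mul_tail_div hα.ne' hW (hR0 ω))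
  filter_upwards [hC, eventually_gt_atTop 0] with x hx hx0
  refine ae_of_all _ fun ω => ?_
  rw [Real.norm_of_nonneg (div_nonneg measureReal_nonneg (hF.pos x hx0).le)]
  exact hx (R ω) (hR0 ω)

end Breiman

/-! ### Balanced tails -/

lemma tendsto_div_of_eq_mul {f F : ℝ → ℝ} {r : ℝ} (hF : ∀ x, 0 < x → 0 < F x)
    (hf : ∀ x, 0 < x → f x = r * F x) : Tendsto (fun x => f x / F x) atTop (𝓝 r) := by
  refine tendsto_const_nhds.congr' ?_
  filter_upwards [eventually_gt_atTop 0] with x hx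
  rw [hf x hx, mul_div_cancel_right₀ _ (hF x hx).ne']

section TailBalance

variable {Ω : Type*} [MeasurableSpace Ω]

/-- `Y` has tails of order `F`, a regularly varying tail with index `α`, with limiting weights `p`
at `+∞` and `q` at `-∞`. -/
structure HasBalancedTails (μ : Measure Ω) (Y : Ω → ℝ) (F : ℝ → ℝ) (α p q : ℝ) : Prop
    extends IsRegVarTail_s8 F α where
  tendsto_right : Tendsto (fun x => μ.real {ω | x < Y ω} / F x) atTop (𝓝 p)
  tendsto_left : Tendsto (fun x => μ.real {ω | x < -Y ω} / F x) atTop (𝓝 q)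

variable {μ : Measure Ω} [IsFiniteMeasure μ]

/-- The strict tail at `x` lies between the non-strict tails at `δ * x`, `δ > 1`, and at `x`. -/
lemma IsRegVarTail_s8.tendsto_tail_div_of_tail_ge {F : ℝ → ℝ} {α r : ℝ} {W : Ω → ℝ}
    (hF : IsRegVarTail_s8 F α)
    (hW : Tendsto (fun x => μ.real {ω | x ≤ W ω} / F x) atTop (𝓝 r)) :
    Tendsto (fun x => μ.real {ω | x < W ω} / F x) atTop (𝓝 r) := by
  refine tendsto_order.2 ⟨fun a ha => ?_, fun a ha => ?_⟩
  · have hcont : Tendsto (fun δ : ℝ => r * δ ^ (-α)) (𝓝[>] 1) (𝓝 r) := by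
      have h := (Real.continuousAt_rpow_const 1 (-α) (.inl one_ne_zero)).tendsto.const_mul r
      rw [Real.one_rpow, mul_one] at h
      exact h.mono_left nhdsWithin_le_nhds
    obtain ⟨δ, haδ, hδ⟩ := ((hcont.eventually_const_lt ha).and self_mem_nhdsWithin).exists
    filter_upwards [(hF.tendsto_comp_mul_div hW (one_pos.trans hδ)).eventually_const_lt haδ,
      eventually_gt_atTop 0] with x hx hx0
    exact hx.trans_le <| (div_le_div_iff_of_pos_right (hF.pos x hx0)).2 <|
      measureReal_mono fun ω hω => (lt_mul_of_one_lt_left hx0 hδ).trans_le hω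
  · filter_upwards [hW.eventually_lt_const ha, eventually_gt_atTop 0] with x hx hx0
    exact hx.trans_le' <| (div_le_div_iff_of_pos_right (hF.pos x hx0)).2 <|
      measureReal_mono fun ω (hω : x < W ω) => hω.le

variable {Y : Ω → ℝ} {L : ℝ → ℝ} {α p q : ℝ}

lemma isRegVarTail_of_tails_eq (hpq : p + q = 1) (hLpos : ∀ x, 0 < x → 0 < L x)
    (hLslow : ∀ c, 0 < c → Tendsto (fun x => L (c * x) / L x) atTop (𝓝 1))
    (hright : ∀ x, 0 < x → μ.real {ω | x < Y ω} = p * L x * x ^ (-α))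
    (hleft : ∀ x, 0 < x → μ.real {ω | Y ω ≤ -x} = q * L x * x ^ (-α)) :
    IsRegVarTail_s8 (fun x => L x * x ^ (-α)) α where
  pos x hx := mul_pos (hLpos x hx) (Real.rpow_pos_of_pos hx _)
  antitoneOn := by
    have hsum (x : ℝ) (hx : 0 < x) :
        L x * x ^ (-α) = μ.real {ω | x < Y ω} + μ.real {ω | Y ω ≤ -x} := by
      rw [hright x hx, hleft x hx, ← add_mul, ← add_mul, hpq, one_mul]
    intro x hx y hy hxy
    simp only [hsum x hx, hsum y hy]
    exact add_le_add (measureReal_mono fun ω hω => hxy.trans_lt hω)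
      (measureReal_mono fun ω hω => le_trans hω (neg_le_neg hxy))
  tendsto_ratio c hc := tendsto_ratio_mul_rpow hc (hLslow c hc)

lemma hasBalancedTails_of_tails_eq (hpq : p + q = 1) (hLpos : ∀ x, 0 < x → 0 < L x)
    (hLslow : ∀ c, 0 < c → Tendsto (fun x => L (c * x) / L x) atTop (𝓝 1))
    (hright : ∀ x, 0 < x → μ.real {ω | x < Y ω} = p * L x * x ^ (-α))
    (hleft : ∀ x, 0 < x → μ.real {ω | Y ω ≤ -x} = q * L x * x ^ (-α)) :
    HasBalancedTails μ Y (fun x => L x * x ^ (-α)) α p q := by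
  have hF := isRegVarTail_of_tails_eq hpq hLpos hLslow hright hleft
  refine ⟨hF, ?_, hF.tendsto_tail_div_of_tail_ge ?_⟩
  · exact tendsto_div_of_eq_mul hF.pos fun x hx => (hright x hx).trans (mul_assoc _ _ _)
  · simp only [le_neg (b := Y _)]
    exact tendsto_div_of_eq_mul hF.pos fun x hx => (hleft x hx).trans (mul_assoc _ _ _)

end TailBalance

lemma forall_measure_gt_pos_of_tendsto {Ω : Type*} [MeasurableSpace Ω] {μ : Measure Ω}
    {W : Ω → ℝ} {F : ℝ → ℝ} {r : ℝ} (hr : r ≠ 0)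
    (hW : Tendsto (fun x => μ.real {ω | x < W ω} / F x) atTop (𝓝 r)) (x : ℝ) :
    0 < μ {ω | x < W ω} := by
  obtain ⟨y, hy, hxy⟩ := ((hW.eventually_ne hr).and (eventually_ge_atTop x)).exists
  have hy0 : μ {ω | y < W ω} ≠ 0 := fun h => hy (by rw [measureReal_def, h]; simp)
  exact (pos_iff_ne_zero.2 hy0).trans_le (measure_mono fun ω hω => hxy.trans_lt hω)

/-! ### Tilted laws of directions -/

section Direction

variable {E : Type*} [NormedAddCommGroup E] [NormedSpace ℝ E]

lemma normalize_smul_eq_sign_smul (y : ℝ) (g : E) :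
    normalize (y • g) = Real.sign y • normalize g := by
  rw [NormedSpace.normalize_smul]
  rcases lt_trichotomy y 0 with hy | rfl | hy
  · simp [hy, Real.sign_of_neg hy]
  · simp
  · simp [hy, Real.sign_of_pos hy]

variable [MeasurableSpace E]

lemma measurable_normalize [BorelSpace E] : Measurable (normalize : E → E) :=
  measurable_of_continuousOn_compl_singleton 0 <|
    (continuousOn_id.norm.inv₀ fun _ hx => norm_ne_zero_iff.2 hx).smul continuousOn_id

variable {Ω : Type*} [MeasurableSpace Ω]

/-- The law of the direction `G / ‖G‖` after tilting `μ` by `‖G‖ ^ α`; unnormalised, its total mass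
is `E ‖G‖ ^ α`. It lives on the ambient space `E`, and the event `G = 0`, where `normalize` takes
the value `0`, carries no mass when `α ≠ 0`. -/
noncomputable def tiltedDirection (μ : Measure Ω) (α : ℝ) (G : Ω → E) : Measure E :=
  (μ.withDensity fun ω => ENNReal.ofReal (‖G ω‖ ^ α)).map fun ω => normalize (G ω)

/-- The spectral measure of `Y • G` when `Y` has tail weights `p` at `+∞` and `q` at `-∞`: the
normalised mixture of the tilted laws of the directions of `G` and `-G`, restricted to the
sphere. -/
noncomputable def spectralMeasure (μ : Measure Ω) (α p q : ℝ) (G : Ω → E) :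
    Measure (Metric.sphere (0 : E) 1) :=
  ((p / ∫ ω, ‖G ω‖ ^ α ∂μ).toNNReal • tiltedDirection μ α G +
    (q / ∫ ω, ‖G ω‖ ^ α ∂μ).toNNReal • tiltedDirection μ α (-G)).comap Subtype.val

variable {μ : Measure Ω} {α p q : ℝ} {G : Ω → E}

lemma isFiniteMeasure_tiltedDirection (hint : Integrable (fun ω => ‖G ω‖ ^ α) μ) :
    IsFiniteMeasure (tiltedDirection μ α G) :=
  have := isFiniteMeasure_withDensity_ofReal hint.2
  Measure.isFiniteMeasure_map _ _

variable [BorelSpace E]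

lemma tiltedDirection_real_apply (hG : Measurable G) {T : Set E} (hT : MeasurableSet T) :
    (tiltedDirection μ α G).real T = ∫ ω in {ω | normalize (G ω) ∈ T}, ‖G ω‖ ^ α ∂μ := by
  have hdir : Measurable fun ω => normalize (G ω) := measurable_normalize.comp hG
  rw [tiltedDirection, map_measureReal_apply hdir hT, measureReal_def,
    withDensity_apply _ (hdir hT), integral_eq_lintegral_of_nonneg_ae
      (ae_of_all _ fun _ => by positivity) (hG.norm.pow_const α).aestronglyMeasurable]
  rfl

lemma tiltedDirection_neg_real_apply (hG : Measurable G) {T : Set E} (hT : MeasurableSet T) :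
    (tiltedDirection μ α (-G)).real T = ∫ ω in {ω | -normalize (G ω) ∈ T}, ‖G ω‖ ^ α ∂μ := by
  simp only [tiltedDirection_real_apply hG.neg hT, Pi.neg_apply, NormedSpace.normalize_neg,
    norm_neg]

lemma tiltedDirection_real_univ (hG : Measurable G) :
    (tiltedDirection μ α G).real Set.univ = ∫ ω, ‖G ω‖ ^ α ∂μ := by
  simp [tiltedDirection_real_apply hG .univ]

lemma tiltedDirection_real_sphere (hG : Measurable G) (hα : α ≠ 0) :
    (tiltedDirection μ α G).real (Metric.sphere 0 1) = ∫ ω, ‖G ω‖ ^ α ∂μ := by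
  rw [tiltedDirection_real_apply hG Metric.isClosed_sphere.measurableSet]
  refine setIntegral_eq_integral_of_forall_compl_eq_zero fun ω hω => ?_
  have hGω : G ω = 0 := by simpa using hω
  rw [hGω, norm_zero, Real.zero_rpow hα]

lemma spectralMeasure_real_apply (hint : Integrable (fun ω => ‖G ω‖ ^ α) μ) (hp : 0 ≤ p)
    (hq : 0 ≤ q) (S : Set (Metric.sphere (0 : E) 1)) :
    (spectralMeasure μ α p q G).real S =
      (p * (tiltedDirection μ α G).real (Subtype.val '' S) +
        q * (tiltedDirection μ α (-G)).real (Subtype.val '' S)) / ∫ ω, ‖G ω‖ ^ α ∂μ := by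
  have := isFiniteMeasure_tiltedDirection hint
  have : IsFiniteMeasure (tiltedDirection μ α (-G)) :=
    isFiniteMeasure_tiltedDirection (by simpa using hint)
  rw [spectralMeasure, measureReal_def,
    (MeasurableEmbedding.subtype_coe Metric.isClosed_sphere.measurableSet).comap_apply,
    ← measureReal_def, measureReal_add_apply, measureReal_nnreal_smul_apply,
    measureReal_nnreal_smul_apply, Real.coe_toNNReal _ (by positivity),
    Real.coe_toNNReal _ (by positivity)]
  ring

lemma spectralMeasure_real_apply_eq_integral (hG : Measurable G)
    (hint : Integrable (fun ω => ‖G ω‖ ^ α) μ) (hp : 0 ≤ p) (hq : 0 ≤ q)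
    {S : Set (Metric.sphere (0 : E) 1)} (hS : MeasurableSet S) :
    (spectralMeasure μ α p q G).real S =
      (p * (∫ ω in {ω | normalize (G ω) ∈ Subtype.val '' S}, ‖G ω‖ ^ α ∂μ) +
        q * ∫ ω in {ω | -normalize (G ω) ∈ Subtype.val '' S}, ‖G ω‖ ^ α ∂μ) /
      ∫ ω, ‖G ω‖ ^ α ∂μ := by
  have hS' : MeasurableSet ((↑) '' S : Set E) :=
    Metric.isClosed_sphere.measurableSet.subtype_image hS
  rw [spectralMeasure_real_apply hint hp hq, tiltedDirection_real_apply hG hS',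
    tiltedDirection_neg_real_apply hG hS']

lemma isProbabilityMeasure_spectralMeasure (hG : Measurable G) (hα : α ≠ 0)
    (hint : Integrable (fun ω => ‖G ω‖ ^ α) μ) (hm : ∫ ω, ‖G ω‖ ^ α ∂μ ≠ 0)
    (hp : 0 ≤ p) (hq : 0 ≤ q) (hpq : p + q = 1) :
    IsProbabilityMeasure (spectralMeasure μ α p q G) := by
  refine isProbabilityMeasure_iff_real.2 ?_
  rw [spectralMeasure_real_apply hint hp hq, Subtype.coe_image_univ,
    tiltedDirection_real_sphere hG hα, tiltedDirection_real_sphere hG.neg hα]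
  simp only [Pi.neg_apply, norm_neg]
  rw [← add_mul, hpq, one_mul, div_self hm]

end Direction

/-! ### Breiman's lemma for random vectors -/

lemma setOf_lt_norm_smul_eq_union {ι E : Type*} [NormedAddCommGroup E] [NormedSpace ℝ E] {x : ℝ}
    (hx : 0 ≤ x) (Y : ι → ℝ) (G : ι → E) (T : Set E) :
    {i | x < ‖Y i • G i‖ ∧ normalize (Y i • G i) ∈ T} =
      {i | x < ‖G i‖ * Y i ∧ normalize (G i) ∈ T} ∪
        {i | x < ‖(-G) i‖ * (-Y) i ∧ normalize ((-G) i) ∈ T} := by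
  ext i
  simp only [Set.mem_union, Set.mem_ofPred_eq, Pi.neg_apply, norm_neg, norm_smul, Real.norm_eq_abs,
    mul_comm |Y i|, NormedSpace.normalize_neg, mul_neg]
  have hG := norm_nonneg (G i)
  rcases lt_trichotomy (Y i) 0 with hY | hY | hY
  · have : ¬ x < ‖G i‖ * Y i := by nlinarith
    simp [this, abs_of_neg hY, NormedSpace.normalize_smul_of_neg hY]
  · simp [hY, hx.not_gt]
  · have : ¬ x < -(‖G i‖ * Y i) := by nlinarith
    simp [this, abs_of_pos hY, NormedSpace.normalize_smul_of_pos hY]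

lemma IsRegVarTail_s8.tendsto_comp_mul_div_of_tendsto {F N D : ℝ → ℝ} {α a b t : ℝ}
    (hF : IsRegVarTail_s8 F α) (hN : Tendsto (fun x => N x / F x) atTop (𝓝 a))
    (hD : Tendsto (fun x => D x / F x) atTop (𝓝 b)) (hb : b ≠ 0) (ht : 0 < t) :
    Tendsto (fun x => N (t * x) / D x) atTop (𝓝 (t ^ (-α) * (a / b))) := by
  rw [← mul_div_assoc, mul_comm (t ^ (-α))]
  refine ((hF.tendsto_comp_mul_div hN ht).div hD hb).congr' ?_
  filter_upwards [eventually_gt_atTop 0] with x hx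
  exact div_div_div_cancel_right₀ (hF.pos x hx).ne' _ _

section VectorBreiman

variable {Ω E : Type*} [MeasurableSpace Ω] [NormedAddCommGroup E] [NormedSpace ℝ E]
  [MeasurableSpace E] [BorelSpace E] {μ : Measure Ω} [IsFiniteMeasure μ]
  {F : ℝ → ℝ} {α β r p q : ℝ} {W Y : Ω → ℝ} {G : Ω → E} {T : Set E}

/-- Breiman's lemma for the scalar factor `‖G‖`, set to `0` where the direction of `G` is not in
`T`. -/
lemma IsRegVarTail_s8.tendsto_norm_mul_tail_div (hF : IsRegVarTail_s8 F α) (hα : 0 < α) (hαβ : α < β)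
    (hG : Measurable G) (hWm : Measurable W) (hGW : IndepFun G W μ)
    (hint : Integrable (fun ω => ‖G ω‖ ^ β) μ)
    (hW : Tendsto (fun x => μ.real {ω | x < W ω} / F x) atTop (𝓝 r)) (hT : MeasurableSet T) :
    Tendsto (fun x => μ.real {ω | x < ‖G ω‖ * W ω ∧ normalize (G ω) ∈ T} / F x) atTop
      (𝓝 (r * (tiltedDirection μ α G).real T)) := by
  let A : Set E := {g | normalize g ∈ T}
  have hA : MeasurableSet A := measurable_normalize hT
  let ρ : E → ℝ := A.indicator norm
  have hρm : Measurable ρ := measurable_norm.indicator hA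
  have hρ0 (g : E) : 0 ≤ ρ g := Set.indicator_nonneg (fun g _ => norm_nonneg g) g
  have hρ_rpow {s : ℝ} (hs : s ≠ 0) (ω : Ω) :
      ρ (G ω) ^ s = (G ⁻¹' A).indicator (fun ω => ‖G ω‖ ^ s) ω := by
    by_cases h : G ω ∈ A <;> simp [ρ, h, hs]
  have hρint : Integrable (fun ω => ρ (G ω) ^ β) μ := by
    simpa only [hρ_rpow (hα.trans hαβ).ne'] using hint.indicator (hG hA)
  have hlim := hF.tendsto_mul_tail_div hα hαβ (hρm.comp hG) (fun ω => hρ0 (G ω)) hWm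
    (hGW.comp hρm measurable_id) hρint hW
  simp only [Function.comp_apply, hρ_rpow hα.ne', integral_indicator (hG hA)] at hlim
  rw [tiltedDirection_real_apply hG hT]
  refine hlim.congr' ?_
  filter_upwards [eventually_ge_atTop 0] with x hx
  congr 3 with ω
  by_cases h : normalize (G ω) ∈ T <;> simp [ρ, A, h, hx]

theorem HasBalancedTails.tendsto_smul_tail_div (h : HasBalancedTails μ Y F α p q) (hα : 0 < α)
    (hαβ : α < β) (hG : Measurable G) (hY : Measurable Y) (hGY : IndepFun G Y μ)
    (hint : Integrable (fun ω => ‖G ω‖ ^ β) μ) (hT : MeasurableSet T) :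
    Tendsto (fun x => μ.real {ω | x < ‖Y ω • G ω‖ ∧ normalize (Y ω • G ω) ∈ T} / F x) atTop
      (𝓝 (p * (tiltedDirection μ α G).real T + q * (tiltedDirection μ α (-G)).real T)) := by
  have hpos := h.tendsto_norm_mul_tail_div hα hαβ hG hY hGY hint h.tendsto_right hT
  have hneg := h.tendsto_norm_mul_tail_div hα hαβ hG.neg hY.neg
    (hGY.comp measurable_neg measurable_neg) (by simpa using hint) h.tendsto_left hT
  refine (hpos.add hneg).congr' ?_
  filter_upwards [eventually_ge_atTop 0] with x hx
  rw [setOf_lt_norm_smul_eq_union hx, measureReal_union, add_div]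
  · refine Set.disjoint_left.2 fun ω hω hω' => ?_
    have h₁ : x < ‖G ω‖ * Y ω := hω.1
    have h₂ : x < ‖-G ω‖ * -Y ω := hω'.1
    rw [norm_neg, mul_neg] at h₂
    linarith
  · exact (measurableSet_lt measurable_const (hG.neg.norm.mul hY.neg)).inter
      (measurable_normalize.comp hG.neg hT)

lemma HasBalancedTails.tendsto_norm_smul_tail_div (h : HasBalancedTails μ Y F α p q)
    (hpq : p + q = 1) (hα : 0 < α) (hαβ : α < β) (hG : Measurable G) (hY : Measurable Y)
    (hGY : IndepFun G Y μ) (hint : Integrable (fun ω => ‖G ω‖ ^ β) μ) :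
    Tendsto (fun x => μ.real {ω | x < ‖Y ω • G ω‖} / F x) atTop (𝓝 (∫ ω, ‖G ω‖ ^ α ∂μ)) := by
  have hlim := h.tendsto_smul_tail_div hα hαβ hG hY hGY hint .univ
  rw [tiltedDirection_real_univ hG, tiltedDirection_real_univ hG.neg] at hlim
  simpa only [Set.mem_univ, and_true, Pi.neg_apply, norm_neg, ← add_mul, hpq, one_mul] using hlim

theorem HasBalancedTails.tendsto_smul_tail_ratio (h : HasBalancedTails μ Y F α p q)
    (hp : 0 ≤ p) (hq : 0 ≤ q) (hpq : p + q = 1) (hα : 0 < α) (hαβ : α < β)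
    (hG : Measurable G) (hG0 : ∃ᶠ ω in ae μ, 0 < ‖G ω‖) (hY : Measurable Y)
    (hGY : IndepFun G Y μ) (hint : Integrable (fun ω => ‖G ω‖ ^ β) μ)
    {t : ℝ} (ht : 0 < t) {S : Set (Metric.sphere (0 : E) 1)} (hS : MeasurableSet S) :
    Tendsto (fun x => μ.real {ω | t * x < ‖Y ω • G ω‖ ∧ normalize (Y ω • G ω) ∈ Subtype.val '' S} /
        μ.real {ω | x < ‖Y ω • G ω‖}) atTop
      (𝓝 (t ^ (-α) * (spectralMeasure μ α p q G).real S)) := by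
  have hintα := integrable_rpow_of_le hG.norm.aestronglyMeasurable (fun _ => norm_nonneg _) hα
    hαβ.le hint
  rw [spectralMeasure_real_apply hintα hp hq]
  exact h.tendsto_comp_mul_div_of_tendsto
    (h.tendsto_smul_tail_div hα hαβ hG hY hGY hint
      (Metric.isClosed_sphere.measurableSet.subtype_image hS))
    (h.tendsto_norm_smul_tail_div hpq hα hαβ hG hY hGY hint)
    (integral_norm_rpow_ne_zero hG0 hintα) ht

end VectorBreiman

theorem stmt_8_general {E : Type*} [NormedAddCommGroup E] [NormedSpace ℝ E] [MeasurableSpace E]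
    [BorelSpace E] [IsProbabilityMeasure (ℙ : Measure Ω)] {α : ℝ} (hα : 0 < α) {Y : Ω → ℝ}
    {G : Ω → E} (hYm : Measurable Y) (hGm : Measurable G) (hindep : IndepFun G Y)
    (hG0 : ∃ᶠ ω in ae (ℙ : Measure Ω), 0 < ‖G ω‖)
    {p q : ℝ} (hp : 0 ≤ p) (hq : 0 ≤ q) (hpq : p + q = 1) {L : ℝ → ℝ}
    (hLpos : ∀ x : ℝ, 0 < x → 0 < L x)
    (hLslow : ∀ c : ℝ, 0 < c → Tendsto (fun x : ℝ => L (c * x) / L x) atTop (nhds 1))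
    (htailp : ∀ x : ℝ, 0 < x →
      ((ℙ : Measure Ω) {ω | Y ω > x}).toReal = p * L x * x ^ (-α))
    (htailq : ∀ x : ℝ, 0 < x →
      ((ℙ : Measure Ω) {ω | Y ω ≤ -x}).toReal = q * L x * x ^ (-α))
    {ε : ℝ} (hε : 0 < ε) (hmom : Integrable (fun ω => ‖G ω‖ ^ (α + ε))) :
    (∀ t : ℝ, 0 < t → ∀ S : Set (Metric.sphere (0 : E) 1), MeasurableSet S →
      Tendsto (fun x : ℝ =>
          ((ℙ : Measure Ω) {ω | ‖G ω‖ * |Y ω| > t * x ∧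
              Real.sign (Y ω) • (‖G ω‖⁻¹ • G ω) ∈ Subtype.val '' S}).toReal /
            ((ℙ : Measure Ω) {ω | ‖G ω‖ * |Y ω| > x}).toReal)
        atTop (nhds (t ^ (-α) *
          ((p * ∫ ω in {ω | ‖G ω‖⁻¹ • G ω ∈ Subtype.val '' S}, ‖G ω‖ ^ α)
            + q * ∫ ω in {ω | -(‖G ω‖⁻¹ • G ω) ∈ Subtype.val '' S}, ‖G ω‖ ^ α) /
          ∫ ω, ‖G ω‖ ^ α))) ∧
    ∃ ν : Measure (Metric.sphere (0 : E) 1),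
      (∀ S : Set (Metric.sphere (0 : E) 1), MeasurableSet S →
        (ν S).toReal =
          ((p * ∫ ω in {ω | ‖G ω‖⁻¹ • G ω ∈ Subtype.val '' S}, ‖G ω‖ ^ α)
            + q * ∫ ω in {ω | -(‖G ω‖⁻¹ • G ω) ∈ Subtype.val '' S}, ‖G ω‖ ^ α) /
          ∫ ω, ‖G ω‖ ^ α) ∧
      IsRegVarWithSpectralMeasure α (fun ω => Y ω • G ω) ν := by
  have hαε : α < α + ε := lt_add_of_pos_right α hε
  have htails := hasBalancedTails_of_tails_eq hpq hLpos hLslow htailp htailq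
  have hintα := integrable_rpow_of_le hGm.norm.aestronglyMeasurable (fun _ => norm_nonneg _) hα
    hαε.le hmom
  have hm := integral_norm_rpow_ne_zero hG0 hintα
  have hν (S : Set (Metric.sphere (0 : E) 1)) (hS : MeasurableSet S) :=
    spectralMeasure_real_apply_eq_integral hGm hintα hp hq hS
  have hratio {t : ℝ} (ht : 0 < t) {S : Set (Metric.sphere (0 : E) 1)} (hS : MeasurableSet S) :=
    htails.tendsto_smul_tail_ratio hp hq hpq hα hαε hGm hG0 hYm hindep hmom ht hS
  refine ⟨fun t ht S hS => ?_, spectralMeasure ℙ α p q G, hν,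
    isProbabilityMeasure_spectralMeasure hGm hα.ne' hintα hm hp hq hpq,
    forall_measure_gt_pos_of_tendsto hm
      (htails.tendsto_norm_smul_tail_div hpq hα hαε hGm hYm hindep hmom),
    fun t ht S hS _ => hratio ht hS⟩
  have hlim := hratio ht hS
  simp only [hν S hS, ← mul_div_assoc, normalize_smul_eq_sign_smul, norm_smul, Real.norm_eq_abs,
    mul_comm |Y _|] at hlim
  exact hlim

/-- multivariate Breiman: tail balance of `Y`, independence of `G` and `Y`,
and `E|G|^{α+ε} < ∞` imply the limit
`P(|G||Y| > tx, sign(Y)·G/|G| ∈ S)/P(|G||Y| > x) → t^{-α}[p E(|G|^α 1_S(G/|G|)) + q E(|G|^α 1_S(−G/|G|))]/E|G|^α`,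
and in particular `GY` is regularly varying with index `α` with the indicated spectral
measure. -/
theorem stmt_8 [IsProbabilityMeasure (ℙ : Measure Ω)]
    (d : ℕ) (α : ℝ) (hα : 0 < α)
    (Y : Ω → ℝ) (G : Ω → EuclideanSpace ℝ (Fin d))
    (hYm : Measurable Y) (hGm : Measurable G)
    (hindep : IndepFun G Y)
    (hGpos : ∀ᵐ ω ∂(ℙ : Measure Ω), 0 < ‖G ω‖)
    (p q : ℝ) (hp : 0 ≤ p) (hq : 0 ≤ q) (hpq : p + q = 1)
    (L : ℝ → ℝ) (hLpos : ∀ x : ℝ, 0 < x → 0 < L x)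
    (hLslow : ∀ c : ℝ, 0 < c → Tendsto (fun x : ℝ => L (c * x) / L x) atTop (nhds 1))
    (htailp : ∀ x : ℝ, 0 < x →
      ((ℙ : Measure Ω) {ω | Y ω > x}).toReal = p * L x * x ^ (-α))
    (htailq : ∀ x : ℝ, 0 < x →
      ((ℙ : Measure Ω) {ω | Y ω ≤ -x}).toReal = q * L x * x ^ (-α))
    (ε : ℝ) (hε : 0 < ε)
    (hmom : Integrable (fun ω => ‖G ω‖ ^ (α + ε))) :
    (∀ t : ℝ, 0 < t → ∀ S : Set (Metric.sphere (0 : EuclideanSpace ℝ (Fin d)) 1),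
      MeasurableSet S →
      (∫ ω in {ω | ‖G ω‖⁻¹ • G ω ∈ Subtype.val '' frontier S}, ‖G ω‖ ^ α) = 0 →
      (∫ ω in {ω | -(‖G ω‖⁻¹ • G ω) ∈ Subtype.val '' frontier S}, ‖G ω‖ ^ α) = 0 →
      Tendsto (fun x : ℝ =>
          ((ℙ : Measure Ω) {ω | ‖G ω‖ * |Y ω| > t * x ∧
              Real.sign (Y ω) • (‖G ω‖⁻¹ • G ω) ∈ Subtype.val '' S}).toReal /
            ((ℙ : Measure Ω) {ω | ‖G ω‖ * |Y ω| > x}).toReal)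
        atTop (nhds (t ^ (-α) *
          ((p * ∫ ω in {ω | ‖G ω‖⁻¹ • G ω ∈ Subtype.val '' S}, ‖G ω‖ ^ α)
            + q * ∫ ω in {ω | -(‖G ω‖⁻¹ • G ω) ∈ Subtype.val '' S}, ‖G ω‖ ^ α) /
          ∫ ω, ‖G ω‖ ^ α))) ∧
    ∃ ν : Measure (Metric.sphere (0 : EuclideanSpace ℝ (Fin d)) 1),
      (∀ S : Set (Metric.sphere (0 : EuclideanSpace ℝ (Fin d)) 1), MeasurableSet S →
        (ν S).toReal =
          ((p * ∫ ω in {ω | ‖G ω‖⁻¹ • G ω ∈ Subtype.val '' S}, ‖G ω‖ ^ α)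
            + q * ∫ ω in {ω | -(‖G ω‖⁻¹ • G ω) ∈ Subtype.val '' S}, ‖G ω‖ ^ α) /
          ∫ ω, ‖G ω‖ ^ α) ∧
      IsRegVarWithSpectralMeasure α (fun ω => Y ω • G ω) ν := by
  have h := stmt_8_general hα hYm hGm hindep hGpos.frequently hp hq hpq hLpos hLslow htailp htailq
    hε hmom
  exact ⟨fun t ht S hS _ _ => h.1 t ht S hS, h.2⟩
end

section
/- Let Y be a real random variable such that |Y| is regularly varying with index α>0, and let G be a random vector in ℝ^d, independent of Y, with E|G|^{α+ε}<∞ for some ε>0 and E|G|^α>0. Then lim_{x→∞} P(|G||Y|>x)/P(|Y|>x) = E|G|^α; in particular |G·Y| is regularly varying with index α, and if (a_n) satisfies n·P(|Y|>a_n)→1 then there is a constant c>0 with n·P(|G·Y|>c·a_n)→1. -/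
open MeasureTheory ProbabilityTheory Filter
open scoped ProbabilityTheory

/-- A nonnegative random variable `R` is regularly varying with index `α > 0`:
`P(R > x) > 0` for all `x`, and `P(R > t x)/P(R > x) → t^{-α}` as `x → ∞`. -/
def IsRegVarTail {Ω : Type*} [MeasureSpace Ω] (α : ℝ) (R : Ω → ℝ) : Prop :=
  (∀ x : ℝ, 0 < (ℙ : Measure Ω) {ω | R ω > x}) ∧
  (∀ t : ℝ, 0 < t →
    Tendsto (fun x : ℝ =>
      ((ℙ : Measure Ω) {ω | R ω > t * x}).toReal / ((ℙ : Measure Ω) {ω | R ω > x}).toReal)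
      atTop (nhds (t ^ (-α))))

/-!
Conditioning on `Z = |G|`, the ratio `P(ZW > x) / P(W > x)` is the expectation of
`P(gW > x) / P(W > x)` at `g = Z`, which tends to `g ^ α` by regular variation. Dominated
convergence applies because, for large `x` and all `g ≥ 0` at once, this quotient is at most
`1 + C g ^ β`: halving the argument of the tail costs at most a factor `2 ^ β`, and about `log₂ g`
halvings lead from `x` to `x / g`.

The other two claims depend only on the tail equivalence `P(ZW > x) ~ m P(W > x)`. A normalizing
sequence of `W` has to be rescaled by `c = m ^ (1 / α)` because `P(W > c x) ~ m⁻¹ P(W > x)`.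
-/

section RegularVariation

/-- Regular variation with index `ρ` of a real function at infinity. The tail of a regularly varying
random variable of index `α` has `ρ = -α`. -/
def IsRegVar (ρ : ℝ) (F : ℝ → ℝ) : Prop :=
  ∀ t : ℝ, 0 < t → Tendsto (fun x => F (t * x) / F x) atTop (nhds (t ^ ρ))

variable {F H : ℝ → ℝ} {α β ρ m : ℝ}

lemma IsRegVar.tendsto_comp_div_div (hF : IsRegVar (-α) F) {g : ℝ} (hg : 0 < g) :
    Tendsto (fun x => F (x / g) / F x) atTop (nhds (g ^ α)) := by
  simpa only [Real.inv_rpow hg.le, Real.rpow_neg hg.le, inv_inv, inv_mul_eq_div]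
    using hF g⁻¹ (inv_pos.2 hg)

lemma eventually_ne_zero_of_tendsto_div (hm : m ≠ 0)
    (hHF : Tendsto (fun x => H x / F x) atTop (nhds m)) :
    ∀ᶠ x in atTop, H x ≠ 0 ∧ F x ≠ 0 :=
  (hHF.eventually_ne hm).mono fun _ hx => div_ne_zero_iff.1 hx

lemma IsRegVar.of_tendsto_div (hF : IsRegVar ρ F) (hm : m ≠ 0)
    (hHF : Tendsto (fun x => H x / F x) atTop (nhds m)) : IsRegVar ρ H := by
  intro t ht
  have htop : Tendsto (fun x : ℝ => t * x) atTop atTop := tendsto_id.const_mul_atTop ht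
  have hne := eventually_ne_zero_of_tendsto_div hm hHF
  have hlim := ((hHF.comp htop).mul (hF t ht)).div hHF hm
  rw [mul_div_cancel_left₀ _ hm] at hlim
  refine hlim.congr' ?_
  filter_upwards [hne, htop.eventually hne] with x ⟨hHx, hFx⟩ ⟨_, hFtx⟩
  simp only [Function.comp_apply, Pi.div_apply]
  field_simp

lemma pos_of_antitone_of_tendsto_div (hH : Antitone H) (hF : ∀ x, 0 < F x) (hm : 0 < m)
    (hHF : Tendsto (fun x => H x / F x) atTop (nhds m)) (x : ℝ) : 0 < H x := by
  obtain ⟨y, hy, hxy⟩ := ((hHF.eventually_const_lt hm).and (eventually_ge_atTop x)).exists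
  exact ((div_pos_iff_of_pos_right (hF y)).1 hy).trans_le (hH hxy)

lemma IsRegVar.eventually_comp_half_le (hF : IsRegVar (-α) F) (hpos : ∀ᶠ x in atTop, 0 < F x)
    (hαβ : α < β) : ∀ᶠ x in atTop, F (x / 2) ≤ 2 ^ β * F x := by
  have hlt : (2 : ℝ) ^ α < 2 ^ β := Real.rpow_lt_rpow_of_exponent_lt one_lt_two hαβ
  filter_upwards [(hF.tendsto_comp_div_div two_pos).eventually_lt_const hlt, hpos] with x hx hFx
  exact (div_le_iff₀ hFx).1 hx.le

lemma comp_div_two_pow_le {M x₀ K : ℝ} (hanti : Antitone F) (hpos : ∀ x, 0 < F x)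
    (hM : ∀ x, F x ≤ M) (hK : 1 ≤ K) (hhalf : ∀ x ≥ x₀, F (x / 2) ≤ K * F x) (n : ℕ) {x : ℝ}
    (hx : x₀ ≤ x) : F (x / 2 ^ n) ≤ M / F (2 * x₀) * K ^ n * F x := by
  have hC : 1 ≤ M / F (2 * x₀) := (one_le_div (hpos _)).2 (hM _)
  induction n generalizing x with
  | zero => simpa only [pow_zero, div_one, mul_one] using le_mul_of_one_le_left (hpos x).le hC
  | succ n ih =>
    rcases le_total (2 * x₀) x with hlarge | hsmall
    · calc F (x / 2 ^ (n + 1)) = F (x / 2 / 2 ^ n) := by rw [div_div, pow_succ']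
        _ ≤ M / F (2 * x₀) * K ^ n * F (x / 2) := ih (by linarith)
        _ ≤ M / F (2 * x₀) * K ^ n * (K * F x) := by gcongr; exact hhalf x hx
        _ = M / F (2 * x₀) * K ^ (n + 1) * F x := by ring
    -- Here `x / 2` may lie below `x₀`, where halving is uncontrolled, but `F x ≥ F (2 * x₀)`.
    · calc F (x / 2 ^ (n + 1)) ≤ M := hM _
        _ = M / F (2 * x₀) * F (2 * x₀) := (div_mul_cancel₀ _ (hpos _).ne').symm
        _ ≤ M / F (2 * x₀) * F x := by gcongr; exact hanti hsmall
        _ ≤ M / F (2 * x₀) * K ^ (n + 1) * F x := by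
          gcongr
          · exact (hpos x).le
          · exact le_mul_of_one_le_right (by positivity) (one_le_pow₀ hK)

lemma IsRegVar.exists_potter_bound {M : ℝ} (hF : IsRegVar (-α) F) (hanti : Antitone F)
    (hpos : ∀ x, 0 < F x) (hM : ∀ x, F x ≤ M) (hβ : 0 ≤ β) (hαβ : α < β) :
    ∃ C ≥ 0, ∀ᶠ x in atTop, ∀ g ≥ 1, F (x / g) ≤ C * g ^ β * F x := by
  obtain ⟨x₀, hhalf⟩ :=
    eventually_atTop.1 (hF.eventually_comp_half_le (Eventually.of_forall hpos) hαβ)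
  have hC : 0 ≤ M / F (2 * x₀) := div_nonneg ((hpos 0).le.trans (hM 0)) (hpos _).le
  have hK : (1 : ℝ) ≤ 2 ^ β := Real.one_le_rpow one_le_two hβ
  refine ⟨M / F (2 * x₀) * 2 ^ β, by positivity, ?_⟩
  filter_upwards [eventually_ge_atTop x₀, eventually_ge_atTop 0] with x hx hx0 g hg
  obtain ⟨n, hng, hgn⟩ := exists_nat_pow_near hg one_lt_two
  have hFx := (hpos x).le
  calc F (x / g) ≤ F (x / 2 ^ (n + 1)) := hanti (by gcongr)
    _ ≤ M / F (2 * x₀) * (2 ^ β) ^ (n + 1) * F x :=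
      comp_div_two_pow_le hanti hpos hM hK hhalf (n + 1) hx
    _ = M / F (2 * x₀) * 2 ^ β * (2 ^ n) ^ β * F x := by
      rw [← Real.rpow_pow_comm zero_le_two]; ring
    _ ≤ M / F (2 * x₀) * 2 ^ β * g ^ β * F x := by gcongr

section NormalizingSequences

variable {ι : Type*} {l : Filter ι} {a r : ι → ℝ} {L : ℝ}

lemma tendsto_atTop_of_antitone_of_tendsto_comp {γ δ : Type*} [LinearOrder γ] [LinearOrder δ]
    [TopologicalSpace δ] [OrderClosedTopology δ] {f : γ → δ} {u : ι → γ} {y : δ} (hf : Antitone f)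
    (hy : ∀ x, y < f x) (hu : Tendsto (fun i => f (u i)) l (nhds y)) : Tendsto u l atTop :=
  tendsto_atTop.2 fun b => (hu.eventually_lt_const (hy b)).mono fun _ hi => (hf.reflect_lt hi).le

lemma IsRegVar.tendsto_mul_comp_of_tendsto_div (hF : IsRegVar ρ F) (hm : m ≠ 0)
    (hHF : Tendsto (fun x => H x / F x) atTop (nhds m)) (ha : Tendsto a l atTop)
    (hra : Tendsto (fun i => r i * F (a i)) l (nhds L)) {c : ℝ} (hc : 0 < c) :
    Tendsto (fun i => r i * H (c * a i)) l (nhds (L * c ^ ρ * m)) := by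
  have hca : Tendsto (fun i => c * a i) l atTop := ha.const_mul_atTop hc
  have hne := eventually_ne_zero_of_tendsto_div hm hHF
  refine ((hra.mul ((hF c hc).comp ha)).mul (hHF.comp hca)).congr' ?_
  filter_upwards [ha.eventually hne, hca.eventually hne] with i ⟨_, hFa⟩ ⟨_, hFca⟩
  simp only [Function.comp_apply]
  field_simp

lemma IsRegVar.tendsto_mul_comp_rpow_mul (hF : IsRegVar (-α) F) (hα : α ≠ 0) (hanti : Antitone F)
    (hpos : ∀ x, 0 < F x) (hm : 0 < m) (hHF : Tendsto (fun x => H x / F x) atTop (nhds m))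
    (hr : Tendsto r l atTop) (hra : Tendsto (fun i => r i * F (a i)) l (nhds L)) :
    Tendsto (fun i => r i * H (m ^ (1 / α) * a i)) l (nhds L) := by
  have hFa : Tendsto (fun i => F (a i)) l (nhds 0) := by
    refine (hra.div_atTop hr).congr' ?_
    filter_upwards [hr.eventually_ne_atTop 0] with i hi
    exact mul_div_cancel_left₀ _ hi
  have ha := tendsto_atTop_of_antitone_of_tendsto_comp hanti hpos hFa
  have hscale : (m ^ (1 / α)) ^ (-α) = m⁻¹ := by
    rw [← Real.rpow_mul hm.le, mul_neg, one_div_mul_cancel hα, Real.rpow_neg_one]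
  simpa only [hscale, inv_mul_cancel_right₀ hm.ne'] using
    hF.tendsto_mul_comp_of_tendsto_div hm.ne' hHF ha hra (Real.rpow_pos_of_pos hm (1 / α))

end NormalizingSequences

end RegularVariation

section Conditioning

variable {Ω 𝓧 𝓨 : Type*} [MeasurableSpace Ω] [MeasurableSpace 𝓧] [MeasurableSpace 𝓨]
  {μ : Measure Ω} {Z : Ω → 𝓧} {W : Ω → 𝓨} {s : Set (𝓧 × 𝓨)}

lemma map_real_prodMk_preimage (hW : AEMeasurable W μ) (hs : MeasurableSet s) (z : 𝓧) :
    (μ.map W).real (Prod.mk z ⁻¹' s) = μ.real {ω | (z, W ω) ∈ s} :=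
  map_measureReal_apply_of_aemeasurable hW (measurable_prodMk_left hs)

variable [IsFiniteMeasure μ]

lemma measurable_measureReal_prodMk_mem (hW : AEMeasurable W μ) (hs : MeasurableSet s) :
    Measurable fun z => μ.real {ω | (z, W ω) ∈ s} := by
  simp only [← map_real_prodMk_preimage hW hs]
  exact (measurable_measure_prodMk_left hs).ennreal_toReal

lemma measureReal_prodMk_mem_eq_integral_of_indepFun (hZ : AEMeasurable Z μ) (hW : AEMeasurable W μ)
    (hZW : IndepFun Z W μ) (hs : MeasurableSet s) :
    μ.real {ω | (Z ω, W ω) ∈ s} = ∫ ω, μ.real {ω' | (Z ω, W ω') ∈ s} ∂μ := by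
  calc μ.real {ω | (Z ω, W ω) ∈ s}
      = (μ.map fun ω => (Z ω, W ω)).real s :=
        (map_measureReal_apply_of_aemeasurable (hZ.prodMk hW) hs).symm
    _ = ((μ.map Z).prod (μ.map W)).real s := by
        rw [(indepFun_iff_map_prod_eq_prod_map_map hZ hW).1 hZW]
    _ = ∫ z, (μ.map W).real (Prod.mk z ⁻¹' s) ∂μ.map Z := by
        rw [measureReal_def, Measure.prod_apply hs]
        exact (integral_toReal (measurable_measure_prodMk_left hs).aemeasurable
          (ae_of_all _ fun _ => measure_lt_top _ _)).symm
    _ = ∫ z, μ.real {ω' | (z, W ω') ∈ s} ∂μ.map Z := by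
        simp only [map_real_prodMk_preimage hW hs]
    _ = ∫ ω, μ.real {ω' | (Z ω, W ω') ∈ s} ∂μ :=
        integral_map hZ (measurable_measureReal_prodMk_mem hW hs).aestronglyMeasurable

end Conditioning

section Tails

variable {Ω : Type*}

/-- The tail function `x ↦ P(R > x)` of a real random variable `R`. -/
def tailProb [MeasurableSpace Ω] (μ : Measure Ω) (R : Ω → ℝ) (x : ℝ) : ℝ :=
  μ.real {ω | x < R ω}

variable [MeasurableSpace Ω] {μ : Measure Ω} {Z W : Ω → ℝ} {α β g x : ℝ}

lemma tailProb_nonneg (x : ℝ) : 0 ≤ tailProb μ W x :=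
  measureReal_nonneg

lemma tailProb_const_mul (hg : 0 < g) : tailProb μ (fun ω => g * W ω) x = tailProb μ W (x / g) := by
  simp only [tailProb, div_lt_iff₀' hg]

lemma tailProb_zero_mul (hx : 0 ≤ x) : tailProb μ (fun ω => 0 * W ω) x = 0 := by
  simp only [tailProb, zero_mul, hx.not_gt, Set.ofPred_false, measureReal_empty]

lemma tendsto_tailProb_const_mul_div (hα : α ≠ 0) (hreg : IsRegVar (-α) (tailProb μ W))
    (hg : 0 ≤ g) :
    Tendsto (fun x => tailProb μ (fun ω => g * W ω) x / tailProb μ W x) atTop (nhds (g ^ α)) := by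
  rcases hg.eq_or_lt with rfl | hg
  · rw [Real.zero_rpow hα]
    refine tendsto_const_nhds.congr' ?_
    filter_upwards [eventually_ge_atTop 0] with x hx
    rw [tailProb_zero_mul hx, zero_div]
  · simpa only [tailProb_const_mul hg] using hreg.tendsto_comp_div_div hg

variable [IsFiniteMeasure μ]

variable (μ W) in
lemma tailProb_antitone : Antitone (tailProb μ W) :=
  fun _ _ hxy => measureReal_mono fun _ hω => hxy.trans_lt hω

lemma tailProb_const_mul_le_of_le_one (hg : 0 ≤ g) (hg1 : g ≤ 1) (hx : 0 ≤ x) :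
    tailProb μ (fun ω => g * W ω) x ≤ tailProb μ W x := by
  refine measureReal_mono fun ω (hω : x < g * W ω) => ?_
  have hW : 0 < W ω := pos_of_mul_pos_right (hx.trans_lt hω) hg
  exact hω.trans_le (mul_le_of_le_one_left hW.le hg1)

lemma exists_tailProb_const_mul_le (hpos : ∀ x, 0 < tailProb μ W x)
    (hreg : IsRegVar (-α) (tailProb μ W)) (hβ : 0 ≤ β) (hαβ : α < β) :
    ∃ C ≥ 0, ∀ᶠ x in atTop, ∀ g ≥ 0,
      tailProb μ (fun ω => g * W ω) x ≤ (1 + C * g ^ β) * tailProb μ W x := by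
  obtain ⟨C, hC, hbound⟩ := hreg.exists_potter_bound (tailProb_antitone μ W) hpos
    (fun _ => measureReal_mono (Set.subset_univ _)) hβ hαβ
  refine ⟨C, hC, ?_⟩
  filter_upwards [hbound, eventually_ge_atTop 0] with x hx hx0 g hg
  have hWx := (hpos x).le
  rcases le_total g 1 with hg1 | hg1
  · calc tailProb μ (fun ω => g * W ω) x ≤ tailProb μ W x :=
          tailProb_const_mul_le_of_le_one hg hg1 hx0
      _ ≤ (1 + C * g ^ β) * tailProb μ W x :=
          le_mul_of_one_le_left hWx (le_add_of_nonneg_right (by positivity))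
  · calc tailProb μ (fun ω => g * W ω) x = tailProb μ W (x / g) :=
          tailProb_const_mul (one_pos.trans_le hg1)
      _ ≤ C * g ^ β * tailProb μ W x := hx g hg1
      _ ≤ (1 + C * g ^ β) * tailProb μ W x := by gcongr; exact le_add_of_nonneg_left zero_le_one

lemma measurableSet_lt_mul (x : ℝ) : MeasurableSet {p : ℝ × ℝ | x < p.1 * p.2} :=
  measurableSet_lt measurable_const (measurable_fst.mul measurable_snd)

lemma measurable_tailProb_const_mul (hW : AEMeasurable W μ) (x : ℝ) :
    Measurable fun g => tailProb μ (fun ω => g * W ω) x :=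
  measurable_measureReal_prodMk_mem hW (measurableSet_lt_mul x)

lemma tailProb_mul_eq_integral_of_indepFun (hZ : AEMeasurable Z μ) (hW : AEMeasurable W μ)
    (hZW : IndepFun Z W μ) (x : ℝ) :
    tailProb μ (fun ω => Z ω * W ω) x = ∫ ω, tailProb μ (fun ω' => Z ω * W ω') x ∂μ :=
  measureReal_prodMk_mem_eq_integral_of_indepFun hZ hW hZW (measurableSet_lt_mul x)

theorem tendsto_tailProb_mul_div_of_indepFun (hα : 0 < α) (hαβ : α < β) (hZ : AEMeasurable Z μ)
    (hW : AEMeasurable W μ) (hZ0 : 0 ≤ᵐ[μ] Z) (hZW : IndepFun Z W μ)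
    (hpos : ∀ x, 0 < tailProb μ W x) (hreg : IsRegVar (-α) (tailProb μ W))
    (hmom : Integrable (fun ω => Z ω ^ β) μ) :
    Tendsto (fun x => tailProb μ (fun ω => Z ω * W ω) x / tailProb μ W x) atTop
      (nhds (∫ ω, Z ω ^ α ∂μ)) := by
  obtain ⟨C, -, hbound⟩ := exists_tailProb_const_mul_le hpos hreg (hα.trans hαβ).le hαβ
  simp only [tailProb_mul_eq_integral_of_indepFun hZ hW hZW, ← integral_div]
  refine tendsto_integral_filter_of_dominated_convergence (fun ω => 1 + C * Z ω ^ β) ?_ ?_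
    ((integrable_const 1).add (hmom.const_mul C)) ?_
  · exact Eventually.of_forall fun x =>
      (((measurable_tailProb_const_mul hW x).comp_aemeasurable hZ).div_const _).aestronglyMeasurable
  · filter_upwards [hbound] with x hx
    filter_upwards [hZ0] with ω hω
    rw [Real.norm_of_nonneg (div_nonneg (tailProb_nonneg x) (hpos x).le), div_le_iff₀ (hpos x)]
    exact hx (Z ω) hω
  · filter_upwards [hZ0] with ω hω
    exact tendsto_tailProb_const_mul_div hα.ne' hreg hω

end Tails

section RegVarTail

variable {Ω : Type*} [MeasureSpace Ω] [IsProbabilityMeasure (ℙ : Measure Ω)] {α : ℝ}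

lemma isRegVarTail_iff {R : Ω → ℝ} :
    IsRegVarTail α R ↔ (∀ x, 0 < tailProb ℙ R x) ∧ IsRegVar (-α) (tailProb ℙ R) :=
  and_congr_left fun _ => forall_congr' fun _ =>
    (ENNReal.toReal_pos_iff.trans (and_iff_left (measure_lt_top _ _))).symm

lemma IsRegVarTail.of_tendsto_tailProb_div {V W : Ω → ℝ} {m : ℝ} (hW : IsRegVarTail α W)
    (hm : 0 < m) (hVW : Tendsto (fun x => tailProb ℙ V x / tailProb ℙ W x) atTop (nhds m)) :
    IsRegVarTail α V := by
  obtain ⟨hpos, hreg⟩ := isRegVarTail_iff.1 hW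
  exact isRegVarTail_iff.2 ⟨pos_of_antitone_of_tendsto_div (tailProb_antitone ℙ V) hpos hm hVW,
    hreg.of_tendsto_div hm.ne' hVW⟩

theorem stmt_9_general {𝕜 E : Type*} [NormedField 𝕜] [MeasurableSpace 𝕜] [OpensMeasurableSpace 𝕜]
    [NormedAddCommGroup E] [NormedSpace 𝕜 E] [MeasurableSpace E] [OpensMeasurableSpace E]
    {β : ℝ} (hα : 0 < α) (hαβ : α < β) {Y : Ω → 𝕜} {G : Ω → E} (hY : AEMeasurable Y)
    (hG : AEMeasurable G) (hindep : IndepFun G Y) (hreg : IsRegVarTail α (fun ω => ‖Y ω‖))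
    (hmom : Integrable (fun ω => ‖G ω‖ ^ β)) (hpos : 0 < ∫ ω, ‖G ω‖ ^ α) :
    Tendsto (fun x => tailProb ℙ (fun ω => ‖G ω‖ * ‖Y ω‖) x / tailProb ℙ (fun ω => ‖Y ω‖) x)
      atTop (nhds (∫ ω, ‖G ω‖ ^ α)) ∧
    IsRegVarTail α (fun ω => ‖Y ω • G ω‖) ∧
    ∀ a : ℕ → ℝ,
      Tendsto (fun n : ℕ => n * tailProb ℙ (fun ω => ‖Y ω‖) (a n)) atTop (nhds 1) →
      Tendsto (fun n : ℕ => n * tailProb ℙ (fun ω => ‖Y ω • G ω‖)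
        ((∫ ω, ‖G ω‖ ^ α) ^ (1 / α) * a n)) atTop (nhds 1) := by
  obtain ⟨hYpos, hYreg⟩ := isRegVarTail_iff.1 hreg
  have hlim := tendsto_tailProb_mul_div_of_indepFun hα hαβ hG.norm hY.norm
    (ae_of_all _ fun ω => norm_nonneg (G ω)) (hindep.comp measurable_norm measurable_norm)
    hYpos hYreg hmom
  simp only [norm_smul, mul_comm ‖Y _‖]
  exact ⟨hlim, hreg.of_tendsto_tailProb_div hpos hlim, fun a ha =>
    hYreg.tendsto_mul_comp_rpow_mul hα.ne' (tailProb_antitone ℙ _) hYpos hpos hlim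
      tendsto_natCast_atTop_atTop ha⟩

end RegVarTail

/-- Breiman's lemma: if `|Y|` is regularly varying with index `α` and `G` is
an independent random vector with `E|G|^{α+ε} < ∞` and `E|G|^α > 0`, then
`P(|G||Y| > x)/P(|Y| > x) → E|G|^α`; in particular `|G⬝Y|` is regularly varying with index
`α`, and if `n·P(|Y| > a_n) → 1` then `n·P(|G⬝Y| > c·a_n) → 1` for some `c > 0`. -/
theorem stmt_9 {Ω : Type*} [MeasureSpace Ω] [IsProbabilityMeasure (ℙ : Measure Ω)]
    (d : ℕ) (α : ℝ) (hα : 0 < α)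
    (Y : Ω → ℝ) (G : Ω → EuclideanSpace ℝ (Fin d))
    (hYm : Measurable Y) (hGm : Measurable G)
    (hindep : IndepFun G Y)
    (hreg : IsRegVarTail α (fun ω => |Y ω|))
    (ε : ℝ) (hε : 0 < ε)
    (hmom : Integrable (fun ω => ‖G ω‖ ^ (α + ε)))
    (hpos : 0 < ∫ ω, ‖G ω‖ ^ α) :
    Tendsto (fun x : ℝ =>
        ((ℙ : Measure Ω) {ω | ‖G ω‖ * |Y ω| > x}).toReal /
          ((ℙ : Measure Ω) {ω | |Y ω| > x}).toReal)
      atTop (nhds (∫ ω, ‖G ω‖ ^ α)) ∧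
    IsRegVarTail α (fun ω => ‖Y ω • G ω‖) ∧
    (∀ a : ℕ → ℝ,
      Tendsto (fun n : ℕ => (n : ℝ) * ((ℙ : Measure Ω) {ω | |Y ω| > a n}).toReal)
        atTop (nhds 1) →
      ∃ c > (0 : ℝ),
        Tendsto (fun n : ℕ => (n : ℝ) * ((ℙ : Measure Ω) {ω | ‖Y ω • G ω‖ > c * a n}).toReal)
          atTop (nhds 1)) := by
  obtain ⟨hlim, hreg', hnorm⟩ := stmt_9_general hα (lt_add_of_pos_right α hε) hYm.aemeasurable
    hGm.aemeasurable hindep hreg hmom hpos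
  exact ⟨hlim, hreg', fun a ha => ⟨_, Real.rpow_pos_of_pos hpos (1 / α), hnorm a ha⟩⟩
end

section
/- Let X be a real random variable, regularly varying with index α∈(1,2) and with EX=0, and let (a_n) satisfy n·P(|X|>a_n)→1. Then the sequence n·a_n^{-1}·E[ X·1{|X|≤a_n} ] converges to a finite limit as n→∞. -/
/-!
Since `E[X·1{|X| ≤ a}] - EX = -E[X·1{|X| > a}]`, it is the upper truncated mean that matters. For
`Y = ±X` the layer cake formula gives `E[Y·1{Y > x}] = x·P(Y > x) + ∫_x^∞ P(Y > t) dt`. Let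
`G x = P(|X| > x)`. By the tail balance condition `P(Y > x)/G x → q`, with `q = p` for `X` and
`q = 1 - p` for `-X`; Karamata's theorem (dominated convergence under a Potter bound) then yields
`∫_x^∞ P(Y > t) dt / (x·G x) → q/(α - 1)`. Hence
`E[X·1{|X| > x}] / (x·G x) → (2p - 1)·α/(α - 1)`. Now put `x = a_n`, which tends to infinity because
`G` is positive and nonincreasing, and use that `n·G(a_n)` converges.
-/

open MeasureTheory ProbabilityTheory Filter
open scoped ProbabilityTheory

/-- A real random variable is regularly varying with index `α`: the tails of `|X|` are
positive everywhere, `P(|X| > t x)/P(|X| > x) → t^{-α}`, and the ratio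
`P(X > x)/P(|X| > x)` converges to some `p ∈ [0,1]`. -/
def IsRegularlyVarying {Ω : Type*} [MeasureSpace Ω] (α : ℝ) (X : Ω → ℝ) : Prop :=
  (∀ x : ℝ, 0 < (ℙ : Measure Ω) {ω | |X ω| > x}) ∧
  (∀ t : ℝ, 0 < t →
    Tendsto (fun x : ℝ =>
      ((ℙ : Measure Ω) {ω | |X ω| > t * x}).toReal /
        ((ℙ : Measure Ω) {ω | |X ω| > x}).toReal)
      atTop (nhds (t ^ (-α)))) ∧
  (∃ p ∈ Set.Icc (0 : ℝ) 1,
    Tendsto (fun x : ℝ =>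
      ((ℙ : Measure Ω) {ω | X ω > x}).toReal /
        ((ℙ : Measure Ω) {ω | |X ω| > x}).toReal)
      atTop (nhds p))

open Set
open scoped Topology

/-- A regularly varying tail: a positive nonincreasing function `G` which varies regularly at
infinity with index `-α`. It abstracts the function `x ↦ P(|X| > x)`; positivity is required on all
of `ℝ` so that no ratio has a zero denominator. -/
structure IsRegularlyVaryingTail (G : ℝ → ℝ) (α : ℝ) : Prop where
  antitone : Antitone G
  pos : ∀ x, 0 < G x
  tendsto_ratio : ∀ t, 0 < t → Tendsto (fun x ↦ G (t * x) / G x) atTop (𝓝 (t ^ (-α)))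

namespace IsRegularlyVaryingTail

variable {F G : ℝ → ℝ} {α β q : ℝ}

lemma eventually_two_pow_mul_le (hG : IsRegularlyVaryingTail G α) (hβα : β < α) :
    ∀ᶠ x in atTop, ∀ k : ℕ, G (2 ^ k * x) ≤ ((2 : ℝ) ^ (-β)) ^ k * G x := by
  have hlt : (2 : ℝ) ^ (-α) < 2 ^ (-β) :=
    Real.rpow_lt_rpow_of_exponent_lt one_lt_two (neg_lt_neg hβα)
  obtain ⟨x₀, hx₀⟩ :=
    eventually_atTop.1 ((hG.tendsto_ratio 2 two_pos).eventually_lt_const hlt)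
  have doubling : ∀ y, x₀ ≤ y → G (2 * y) ≤ 2 ^ (-β) * G y := fun y hy ↦
    ((div_lt_iff₀ (hG.pos y)).1 (hx₀ y hy)).le
  filter_upwards [eventually_ge_atTop x₀, eventually_ge_atTop 0] with x hx hx_nonneg k
  induction k with
  | zero => simp
  | succ k ih =>
    have hkx : x ≤ 2 ^ k * x := le_mul_of_one_le_left hx_nonneg (one_le_pow₀ one_le_two)
    calc G (2 ^ (k + 1) * x) = G (2 * (2 ^ k * x)) := by rw [pow_succ', mul_assoc]
      _ ≤ 2 ^ (-β) * G (2 ^ k * x) := doubling _ (hx.trans hkx)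
      _ ≤ 2 ^ (-β) * ((2 ^ (-β)) ^ k * G x) := by gcongr
      _ = (2 ^ (-β)) ^ (k + 1) * G x := by rw [pow_succ', mul_assoc]

lemma potter_bound (hG : IsRegularlyVaryingTail G α) (hβ : 0 ≤ β) (hβα : β < α) :
    ∀ᶠ x in atTop, ∀ s, 1 ≤ s → G (s * x) ≤ 2 ^ β * s ^ (-β) * G x := by
  filter_upwards [hG.eventually_two_pow_mul_le hβα, eventually_ge_atTop 0] with x hx hx_nonneg s hs
  obtain ⟨k, hks, hsk⟩ := exists_nat_pow_near hs one_lt_two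
  -- The factor `2 ^ β` pays for rounding `s` down to a power of two.
  have rounding : ((2 : ℝ) ^ (-β)) ^ k ≤ 2 ^ β * s ^ (-β) :=
    calc ((2 : ℝ) ^ (-β)) ^ k = 2 ^ β * ((2 : ℝ) ^ (k + 1)) ^ (-β) := by
          rw [Real.rpow_pow_comm zero_le_two, pow_succ, Real.mul_rpow (by positivity) zero_le_two,
            mul_left_comm, ← Real.rpow_add two_pos, add_neg_cancel, Real.rpow_zero, mul_one]
      _ ≤ 2 ^ β * s ^ (-β) := by
          gcongr ?_ * ?_
          exact Real.rpow_le_rpow_of_nonpos (one_pos.trans_le hs) hsk.le (neg_nonpos.2 hβ)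
  calc G (s * x) ≤ G (2 ^ k * x) := hG.antitone (by gcongr)
    _ ≤ (2 ^ (-β)) ^ k * G x := hx k
    _ ≤ 2 ^ β * s ^ (-β) * G x := mul_le_mul_of_nonneg_right rounding (hG.pos x).le

lemma eventually_abs_apply_mul_div_le (hG : IsRegularlyVaryingTail G α) (hβ : 0 ≤ β) (hβα : β < α)
    (hq : Tendsto (fun x ↦ F x / G x) atTop (𝓝 q)) :
    ∀ᶠ x in atTop, ∀ s, 1 ≤ s → |F (s * x) / G x| ≤ (|q| + 1) * (2 ^ β * s ^ (-β)) := by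
  obtain ⟨x₀, hx₀⟩ := eventually_atTop.1 (hq.abs.eventually_le_const (lt_add_one |q|))
  filter_upwards [hG.potter_bound hβ hβα, eventually_ge_atTop x₀, eventually_ge_atTop 0]
    with x potter hx hx_nonneg s hs
  have hGx := hG.pos x
  have hGsx := hG.pos (s * x)
  calc |F (s * x) / G x| = |F (s * x) / G (s * x)| * (G (s * x) / G x) := by
        rw [← abs_of_pos (div_pos hGsx hGx), ← abs_mul, div_mul_div_cancel₀ hGsx.ne']
    _ ≤ (|q| + 1) * (2 ^ β * s ^ (-β)) := by
        gcongr
        · exact hx₀ _ (hx.trans (le_mul_of_one_le_left hx_nonneg hs))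
        · exact (div_le_iff₀ hGx).2 (potter s hs)

lemma tendsto_apply_mul_div (hG : IsRegularlyVaryingTail G α)
    (hq : Tendsto (fun x ↦ F x / G x) atTop (𝓝 q)) {s : ℝ} (hs : 0 < s) :
    Tendsto (fun x ↦ F (s * x) / G x) atTop (𝓝 (q * s ^ (-α))) := by
  refine ((hq.comp (tendsto_id.const_mul_atTop hs)).mul (hG.tendsto_ratio s hs)).congr fun x ↦ ?_
  exact div_mul_div_cancel₀ (hG.pos (s * x)).ne'

theorem tendsto_integral_Ioi_div (hG : IsRegularlyVaryingTail G α) (hα : 1 < α)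
    (hF : Measurable F) (hq : Tendsto (fun x ↦ F x / G x) atTop (𝓝 q)) :
    Tendsto (fun x ↦ (∫ t in Ioi x, F t) / (x * G x)) atTop (𝓝 (q / (α - 1))) := by
  obtain ⟨β, hβ, hβα⟩ := exists_between hα
  have limit_eq : ∫ s in Ioi (1 : ℝ), q * s ^ (-α) = q / (α - 1) := by
    rw [integral_const_mul, integral_Ioi_rpow_of_lt (neg_lt_neg hα) one_pos, Real.one_rpow,
      neg_div, ← div_neg, mul_one_div, neg_add, neg_neg, ← sub_eq_add_neg]
  have rescaled : Tendsto (fun x ↦ ∫ s in Ioi (1 : ℝ), F (s * x) / G x) atTop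
      (𝓝 (∫ s in Ioi (1 : ℝ), q * s ^ (-α))) := by
    refine tendsto_integral_filter_of_dominated_convergence
      (fun s ↦ (|q| + 1) * (2 ^ β * s ^ (-β))) ?_ ?_ ?_ ?_
    · exact .of_forall fun x ↦ 
        ((hF.comp (measurable_id.mul_const x)).div_const _).aestronglyMeasurable
    · filter_upwards [hG.eventually_abs_apply_mul_div_le (by linarith) hβα hq] with x hx
      exact ae_restrict_of_forall_mem measurableSet_Ioi fun s hs ↦ hx s (le_of_lt hs)
    · exact ((integrableOn_Ioi_rpow_of_lt (neg_lt_neg hβ) one_pos).const_mul _).const_mul _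
    · exact ae_restrict_of_forall_mem measurableSet_Ioi fun s hs ↦
        hG.tendsto_apply_mul_div hq (one_pos.trans hs)
  rw [← limit_eq]
  refine rescaled.congr' ?_
  filter_upwards [eventually_gt_atTop 0] with x hx
  rw [integral_div, integral_comp_mul_right_Ioi F 1 hx, one_mul, smul_eq_mul, ← div_eq_inv_mul,
    div_div]

end IsRegularlyVaryingTail

section UpperTail

variable {Ω : Type*} [MeasurableSpace Ω] {μ : Measure Ω} [IsFiniteMeasure μ]

lemma antitone_measureReal_lt {β : Type*} [Preorder β] (Y : Ω → β) :
    Antitone fun x ↦ μ.real {ω | x < Y ω} :=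
  fun _ _ hxy ↦ measureReal_mono fun _ hω ↦ lt_of_le_of_lt hxy hω

lemma setIntegral_lt_eq_add_integral_Ioi {Y : Ω → ℝ} (hY : Integrable Y μ) (x : ℝ) :
    ∫ ω in {ω | x < Y ω}, Y ω ∂μ =
      x * μ.real {ω | x < Y ω} + ∫ t in Ioi x, μ.real {ω | t < Y ω} := by
  set S := {ω | x < Y ω}
  have hS : NullMeasurableSet S μ := nullMeasurableSet_lt aemeasurable_const hY.aemeasurable
  have excess_nonneg : 0 ≤ᵐ[μ.restrict S] fun ω ↦ Y ω - x := by
    filter_upwards [ae_restrict_mem₀ hS] with ω hω using sub_nonneg.2 (le_of_lt hω)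
  have excess_tail : ∀ t ∈ Ioi (0 : ℝ),
      (μ.restrict S).real {ω | t < Y ω - x} = μ.real {ω | t + x < Y ω} := by
    intro t ht
    have hsub : {ω | t + x < Y ω} ⊆ S := fun ω hω ↦ (lt_add_of_pos_left x ht).trans hω
    simp only [measureReal_def, Measure.restrict_apply₀' hS, lt_sub_iff_add_lt,
      inter_eq_left.2 hsub]
  have shift : ∫ t in Ioi (0 : ℝ), μ.real {ω | t + x < Y ω} =
      ∫ t in Ioi x, μ.real {ω | t < Y ω} := by
    simpa using (measurePreserving_add_right volume x).setIntegral_preimage_emb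
      (measurableEmbedding_addRight x) (fun t ↦ μ.real {ω | t < Y ω}) (Ioi x)
  have excess : ∫ ω in S, (Y ω - x) ∂μ = ∫ t in Ioi x, μ.real {ω | t < Y ω} := by
    have hint : Integrable (fun ω ↦ Y ω - x) (μ.restrict S) :=
      hY.integrableOn.sub (integrable_const x)
    rw [hint.integral_eq_integral_meas_lt excess_nonneg,
      setIntegral_congr_fun measurableSet_Ioi excess_tail, shift]
  rw [← excess, integral_sub hY.integrableOn (integrable_const x), setIntegral_const, smul_eq_mul]
  ring

lemma IsRegularlyVaryingTail.tendsto_setIntegral_lt_div {G : ℝ → ℝ} {α q : ℝ}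
    (hG : IsRegularlyVaryingTail G α) (hα : 1 < α) {Y : Ω → ℝ} (hY : Integrable Y μ)
    (hq : Tendsto (fun x ↦ μ.real {ω | x < Y ω} / G x) atTop (𝓝 q)) :
    Tendsto (fun x ↦ (∫ ω in {ω | x < Y ω}, Y ω ∂μ) / (x * G x)) atTop
      (𝓝 (q * (α / (α - 1)))) := by
  have limit_eq : q + q / (α - 1) = q * (α / (α - 1)) := by
    field [sub_ne_zero.2 hα.ne']
  rw [← limit_eq]
  refine (hq.add (hG.tendsto_integral_Ioi_div hα (antitone_measureReal_lt Y).measurable hq)).congr'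
    ?_
  filter_upwards [eventually_ne_atTop 0] with x hx
  rw [setIntegral_lt_eq_add_integral_Ioi hY, add_div, mul_div_mul_left _ _ hx]

end UpperTail

section TwoSidedTail

variable {Ω : Type*} {X : Ω → ℝ} {x : ℝ}

lemma setOf_lt_abs (X : Ω → ℝ) (x : ℝ) :
    {ω | x < |X ω|} = {ω | x < X ω} ∪ {ω | x < -X ω} := by
  ext ω
  exact lt_abs (a := x) (b := X ω)

lemma disjoint_setOf_lt_setOf_lt_neg (X : Ω → ℝ) (hx : 0 ≤ x) :
    Disjoint {ω | x < X ω} {ω | x < -X ω} :=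
  disjoint_left.2 fun ω (hpos : x < X ω) (hneg : x < -X ω) ↦ by linarith

variable [MeasurableSpace Ω] {μ : Measure Ω}

lemma measureReal_lt_abs [IsFiniteMeasure μ] (hX : AEMeasurable X μ) (hx : 0 ≤ x) :
    μ.real {ω | x < |X ω|} = μ.real {ω | x < X ω} + μ.real {ω | x < -X ω} := by
  rw [setOf_lt_abs]
  exact measureReal_union₀ (nullMeasurableSet_lt aemeasurable_const hX.neg)
    (disjoint_setOf_lt_setOf_lt_neg X hx).aedisjoint

lemma setIntegral_lt_abs (hX : Integrable X μ) (hx : 0 ≤ x) :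
    ∫ ω in {ω | x < |X ω|}, X ω ∂μ =
      (∫ ω in {ω | x < X ω}, X ω ∂μ) - ∫ ω in {ω | x < -X ω}, -X ω ∂μ := by
  rw [setOf_lt_abs, setIntegral_union₀ (disjoint_setOf_lt_setOf_lt_neg X hx).aedisjoint
    (nullMeasurableSet_lt aemeasurable_const hX.aemeasurable.neg) hX.integrableOn
    hX.integrableOn, integral_neg, sub_neg_eq_add]

lemma setIntegral_abs_le_sub_integral (hX : Integrable X μ) (x : ℝ) :
    (∫ ω in {ω | |X ω| ≤ x}, X ω ∂μ) - ∫ ω, X ω ∂μ = -∫ ω in {ω | x < |X ω|}, X ω ∂μ := by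
  have hcompl : {ω | |X ω| ≤ x} = {ω | x < |X ω|}ᶜ := by
    ext ω
    exact (not_lt (a := x) (b := |X ω|)).symm
  rw [hcompl, setIntegral_compl₀
    (nullMeasurableSet_lt aemeasurable_const hX.aemeasurable.abs) hX, sub_sub_cancel_left]

end TwoSidedTail

namespace IsRegularlyVarying

variable {Ω : Type*} [MeasureSpace Ω] [IsFiniteMeasure (ℙ : Measure Ω)] {X : Ω → ℝ} {α p : ℝ}

lemma isRegularlyVaryingTail (hX : IsRegularlyVarying α X) :
    IsRegularlyVaryingTail (fun x ↦ (ℙ : Measure Ω).real {ω | x < |X ω|}) α where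
  antitone := antitone_measureReal_lt fun ω ↦ |X ω|
  pos x := ENNReal.toReal_pos (hX.1 x).ne' (measure_ne_top _ _)
  tendsto_ratio := hX.2.1

lemma tendsto_measureReal_lt_neg_div (hX : IsRegularlyVarying α X) (hm : AEMeasurable X)
    (hp : Tendsto (fun x ↦ (ℙ : Measure Ω).real {ω | x < X ω} /
      (ℙ : Measure Ω).real {ω | x < |X ω|}) atTop (𝓝 p)) :
    Tendsto (fun x ↦ (ℙ : Measure Ω).real {ω | x < -X ω} /
      (ℙ : Measure Ω).real {ω | x < |X ω|}) atTop (𝓝 (1 - p)) := by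
  refine (hp.const_sub 1).congr' ?_
  filter_upwards [eventually_ge_atTop 0] with x hx
  rw [one_sub_div (hX.isRegularlyVaryingTail.pos x).ne', measureReal_lt_abs hm hx,
    add_sub_cancel_left]

theorem tendsto_setIntegral_lt_abs_div (hX : IsRegularlyVarying α X) (hα : 1 < α)
    (hint : Integrable X)
    (hp : Tendsto (fun x ↦ (ℙ : Measure Ω).real {ω | x < X ω} /
      (ℙ : Measure Ω).real {ω | x < |X ω|}) atTop (𝓝 p)) :
    Tendsto (fun x ↦ (∫ ω in {ω | x < |X ω|}, X ω) /
      (x * (ℙ : Measure Ω).real {ω | x < |X ω|})) atTop (𝓝 ((2 * p - 1) * (α / (α - 1)))) := by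
  have hG := hX.isRegularlyVaryingTail
  have upper := hG.tendsto_setIntegral_lt_div hα hint hp
  have lower := hG.tendsto_setIntegral_lt_div (Y := fun ω ↦ -X ω) hα hint.neg
    (hX.tendsto_measureReal_lt_neg_div hint.aemeasurable hp)
  have limit_eq : p * (α / (α - 1)) - (1 - p) * (α / (α - 1)) =
      (2 * p - 1) * (α / (α - 1)) := by ring
  rw [← limit_eq]
  refine (upper.sub lower).congr' ?_
  filter_upwards [eventually_ge_atTop 0] with x hx
  rw [setIntegral_lt_abs hint hx, sub_div]

end IsRegularlyVarying

lemma tendsto_atTop_of_antitone_of_tendsto_mul {ι β : Type*} [LinearOrder β] {l : Filter ι}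
    {G : β → ℝ} (hG : Antitone G) (hpos : ∀ x, 0 < G x) {a : ι → β} {r : ι → ℝ} {c : ℝ}
    (hr : Tendsto r l atTop) (hc : Tendsto (fun i ↦ r i * G (a i)) l (𝓝 c)) :
    Tendsto a l atTop := by
  have hG_zero : Tendsto (fun i ↦ G (a i)) l (𝓝 0) := by
    refine (hc.div_atTop hr).congr' ?_
    filter_upwards [hr.eventually_ne_atTop 0] with i hi using mul_div_cancel_left₀ _ hi
  refine tendsto_atTop.2 fun M ↦ ?_
  filter_upwards [hG_zero.eventually_lt_const (hpos M)] with i hi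
  exact (hG.reflect_lt hi).le

theorem stmt_13_general {Ω : Type*} [MeasureSpace Ω] [IsFiniteMeasure (ℙ : Measure Ω)]
    {α : ℝ} (hα : 1 < α) {X : Ω → ℝ} (hreg : IsRegularlyVarying α X) (hint : Integrable X)
    {a : ℕ → ℝ} {c : ℝ}
    (ha : Tendsto (fun n : ℕ ↦ (n : ℝ) * (ℙ : Measure Ω).real {ω | a n < |X ω|}) atTop (𝓝 c)) :
    ∃ b : ℝ, Tendsto
      (fun n : ℕ ↦ (n : ℝ) * (a n)⁻¹ * ((∫ ω in {ω | |X ω| ≤ a n}, X ω) - ∫ ω, X ω))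
      atTop (𝓝 b) := by
  have hG := hreg.isRegularlyVaryingTail
  obtain ⟨p, -, hp⟩ := hreg.2.2
  have ha_atTop : Tendsto a atTop atTop :=
    tendsto_atTop_of_antitone_of_tendsto_mul hG.antitone hG.pos tendsto_natCast_atTop_atTop ha
  have upper := (hreg.tendsto_setIntegral_lt_abs_div hα hint hp).comp ha_atTop
  refine ⟨_, (ha.mul upper).neg.congr fun n ↦ ?_⟩
  have hGn := (hG.pos (a n)).ne'
  rw [setIntegral_abs_le_sub_integral hint, Function.comp_apply]
  field_simp

/-- if `X` is regularly varying with index `α ∈ (1,2)` and `EX = 0`, and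
`n·P(|X| > a_n) → 1`, then `n·a_n⁻¹·E[X·1{|X| ≤ a_n}]` converges to a finite limit. -/
theorem stmt_13 {Ω : Type*} [MeasureSpace Ω] [IsProbabilityMeasure (ℙ : Measure Ω)]
    (α : ℝ) (hα : α ∈ Set.Ioo (1 : ℝ) 2) (X : Ω → ℝ) (hXm : Measurable X)
    (hreg : IsRegularlyVarying α X)
    (hint : Integrable X) (hmean : ∫ ω, X ω = 0)
    (a : ℕ → ℝ)
    (ha : Tendsto (fun n : ℕ => (n : ℝ) * ((ℙ : Measure Ω) {ω | |X ω| > a n}).toReal)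
      atTop (nhds 1)) :
    ∃ b : ℝ, Tendsto
      (fun n : ℕ => (n : ℝ) * (a n)⁻¹ * ∫ ω in {ω | |X ω| ≤ a n}, X ω)
      atTop (nhds b) := by
  simpa only [hmean, sub_zero] using stmt_13_general hα.1 hreg hint ha
end
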